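/- arXiv:1901.00327 — 2 statements merged into one kernel-verified Lean document; each statement's English description precedes it below -/
import Mathlib

section
/- Let (X,T) be an invertible topological dynamical system, let A denote the set of asymptotic pairs in X×X and E(X,T) the set of topological entropy pairs. Then the closure of A in X×X contains E(X,T); in other words, asymptotic pairs are dense in the set of entropy pairs. -/
open MeasureTheory Filter Topology Set
open scoped symmDiff Classical ENNReal NNReal

section Defs

variable {X : Type*}

/-- The pair `(x, y)` is (positively) asymptotic for `T`. -/
def IsAsymptoticPair [PseudoMetricSpace X] (T : X → X) (x y : X) : Prop :=
  Tendsto (fun n : ℕ => dist (T^[n] x) (T^[n] y)) atTop (𝓝 0)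

/-- Shannon entropy of the finite measurable partition of `X` given by the fibers of a
map `p` into a finite type. -/
noncomputable def partEntropy [MeasurableSpace X] (μ : Measure X) {ι : Type*} [Fintype ι]
    (p : X → ι) : ℝ :=
  ∑ i : ι, Real.negMulLog (μ (p ⁻¹' {i})).toReal

/-- Conditional Shannon entropy `H(P | F)` of the finite partition given by the fibers
of `p` with respect to the sub-σ-algebra `F`:
`H(P|F) = ∑_{A ∈ P} ∫ -E(1_A|F) log E(1_A|F) dμ`. -/
noncomputable def condPartEntropy [MeasurableSpace X] (μ : Measure X)
    (F : MeasurableSpace X) {ι : Type*} [Fintype ι] (p : X → ι) : ℝ :=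
  ∑ i : ι, ∫ x, Real.negMulLog ((μ[(p ⁻¹' {i}).indicator (fun _ => (1 : ℝ)) | F]) x) ∂μ

/-- The σ-algebra `σ(P^-)` generated by the partitions `T^{-n}P`, `n ≥ 1`
(the "past" of the partition given by the fibers of `p`). -/
def partPast (T : X → X) {ι : Type*} (p : X → ι) : MeasurableSpace X :=
  ⨆ n : ℕ, MeasurableSpace.comap (fun x => p (T^[n + 1] x)) ⊤

/-- The σ-algebra `σ(P^T)` generated by the partitions `T^{-n}P`, `n ∈ ℤ`, where `S = T⁻¹`. -/
def partHull (T S : X → X) {ι : Type*} (p : X → ι) : MeasurableSpace X :=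
  ⨆ n : ℕ,
    MeasurableSpace.comap (fun x => p (T^[n] x)) ⊤ ⊔
      MeasurableSpace.comap (fun x => p (S^[n] x)) ⊤

/-- Kolmogorov–Sinai entropy of a finite partition: `h_μ(P, T) = H(P | P^-)`. -/
noncomputable def partKS [MeasurableSpace X] (μ : Measure X) (T : X → X) {ι : Type*}
    [Fintype ι] (p : X → ι) : ℝ :=
  condPartEntropy μ (partPast T p) p

/-- Kolmogorov–Sinai (measure-theoretic) entropy `h_μ(X, T)` of the system:
the supremum over all finite measurable partitions `P` of `h_μ(P, T)`. -/
noncomputable def ksEntropy [MeasurableSpace X] (μ : Measure X) (T : X → X) : ℝ≥0∞ :=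
  ⨆ (k : ℕ) (p : X → Fin k) (_ : Measurable p), ENNReal.ofReal (partKS μ T p)

/-- The Pinsker σ-algebra `Π_μ`: the σ-algebra generated by all finite measurable
partitions with zero Kolmogorov–Sinai entropy. -/
def pinskerAlg [MeasurableSpace X] (μ : Measure X) (T : X → X) : MeasurableSpace X :=
  ⨆ (k : ℕ) (p : X → Fin k) (_ : Measurable p) (_ : partKS μ T p = 0),
    MeasurableSpace.comap p ⊤

/-- Minimal cardinality of a subcover of `⋁_{i=0}^{n-1} T^{-i} C`, where `C` is a
finite cover of `X`. -/
noncomputable def coverNum (T : X → X) {k : ℕ} (C : Fin k → Set X) (n : ℕ) : ℕ :=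
  sInf {m : ℕ | ∃ f : Fin m → Fin n → Fin k,
    (⋃ j : Fin m, ⋂ i : Fin n, T^[(i : ℕ)] ⁻¹' C (f j i)) = Set.univ}

/-- Topological entropy of a finite cover `C`:
`h(C, T) = inf_n (1/n) log N(⋁_{i=0}^{n-1} T^{-i} C) = lim_n (1/n) log N(...)`. -/
noncomputable def coverEntropyOf (T : X → X) {k : ℕ} (C : Fin k → Set X) : ℝ :=
  ⨅ n : ℕ, Real.log (coverNum T C (n + 1)) / (n + 1)

/-- `(x, y)` is a topological entropy pair: `x ≠ y` and every two-set open cover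
`{Uᶜ, Vᶜ}`, where `U` and `V` are disjoint closed neighbourhoods of `x` and `y`,
has positive topological entropy. -/
def IsEntropyPair [TopologicalSpace X] (T : X → X) (x y : X) : Prop :=
  x ≠ y ∧ ∀ U V : Set X, IsClosed U → IsClosed V → U ∈ 𝓝 x → V ∈ 𝓝 y → Disjoint U V →
    0 < coverEntropyOf T ![Uᶜ, Vᶜ]

/-- `(x, y)` is an entropy pair for the invariant measure `μ`: `x ≠ y` and every two-set
Borel partition `(A, Aᶜ)` with `x ∈ interior A` and `y ∈ interior Aᶜ` has positive
entropy with respect to `T` and `μ`. -/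
def IsMuEntropyPair [TopologicalSpace X] [MeasurableSpace X] (T : X → X) (μ : Measure X)
    (x y : X) : Prop :=
  x ≠ y ∧ ∀ A : Set X, MeasurableSet A → x ∈ interior A → y ∈ interior Aᶜ →
    0 < partKS μ T (fun z => if z ∈ A then (0 : Fin 2) else 1)

/-- `ν` is the relatively independent square `μ ⊠_G μ` of `μ` over the sub-σ-algebra `G`:
it is determined by `ν(A × B) = ∫ E(1_A|G) · E(1_B|G) dμ` for all Borel sets `A`, `B`. -/
def IsCondSquare (G : MeasurableSpace X) [m0 : MeasurableSpace X] (μ : Measure X)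
    (ν : Measure (X × X)) : Prop :=
  ∀ A B : Set X, MeasurableSet[m0] A → MeasurableSet[m0] B →
    ν (A ×ˢ B) = ENNReal.ofReal
      (∫ x, (μ[A.indicator (fun _ => (1 : ℝ)) | G]) x *
            (μ[B.indicator (fun _ => (1 : ℝ)) | G]) x ∂μ)

/-- The σ-algebra `m₁` is contained in `m₂` modulo `μ`-null sets. -/
def SubModNull [MeasurableSpace X] (μ : Measure X) (m₁ m₂ : MeasurableSpace X) : Prop :=
  ∀ A : Set X, MeasurableSet[m₁] A → ∃ B : Set X, MeasurableSet[m₂] B ∧ μ (A ∆ B) = 0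

end Defs

section Defs2

variable {X : Type*}

/-- The σ-algebra `F^- = ⋁_{n ≥ 1} T^{-n} F`. -/
def pastAlg (T : X → X) (F : MeasurableSpace X) : MeasurableSpace X :=
  ⨆ n : ℕ, MeasurableSpace.comap (T^[n + 1]) F

/-- The σ-algebra `F^T = ⋁_{n ∈ ℤ} T^{-n} F`, where `S = T⁻¹`. -/
def hullAlg (T S : X → X) (F : MeasurableSpace X) : MeasurableSpace X :=
  ⨆ n : ℕ, MeasurableSpace.comap (T^[n]) F ⊔ MeasurableSpace.comap (S^[n]) F

/-- `P` is (the σ-algebra of) an *excellent* measurable partition for `(X, μ, T)` (here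
`S = T⁻¹`): it is generating (`σ(P^T) = 𝒜` mod `μ`) and it is generated by an increasing
sequence of finite measurable partitions `Pₙ ↑ P` with `H(Pₙ|Pₙ⁻) − H(Pₙ|P⁻) → 0`. -/
def IsExcellentPartition (P : MeasurableSpace X) [m0 : MeasurableSpace X] (μ : Measure X)
    (T S : X → X) : Prop :=
  P ≤ m0 ∧ SubModNull μ m0 (hullAlg T S P) ∧
  ∃ (m : ℕ → ℕ) (Q : ∀ n : ℕ, X → Fin (m n)),
    (∀ n, Measurable (Q n)) ∧
    Monotone (fun n => MeasurableSpace.comap (Q n) (⊤ : MeasurableSpace (Fin (m n)))) ∧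
    (⨆ n : ℕ, MeasurableSpace.comap (Q n) (⊤ : MeasurableSpace (Fin (m n)))) = P ∧
    Tendsto (fun n => condPartEntropy μ (partPast T (Q n)) (Q n) -
      condPartEntropy μ (pastAlg T P) (Q n)) atTop (𝓝 0)

end Defs2

/-! ### Shannon entropy of a finite family of finite-valued coordinates -/

namespace EPair

/-- Two sample points agree on the coordinates in `A`. -/
def Agr {Ω : Type} (v : Ω → ℕ × ℕ → ℕ) (A : Finset (ℕ × ℕ)) (a b : Ω) : Prop :=
  ∀ p ∈ A, v a p = v b p

theorem Agr.symm {Ω : Type} {v : Ω → ℕ × ℕ → ℕ} {A : Finset (ℕ × ℕ)} {a b : Ω}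
    (h : Agr v A a b) : Agr v A b a := fun p hp => (h p hp).symm

theorem Agr.trans {Ω : Type} {v : Ω → ℕ × ℕ → ℕ} {A : Finset (ℕ × ℕ)} {a b c : Ω}
    (h : Agr v A a b) (h' : Agr v A b c) : Agr v A a c :=
  fun p hp => (h p hp).trans (h' p hp)

theorem Agr.rfl {Ω : Type} {v : Ω → ℕ × ℕ → ℕ} {A : Finset (ℕ × ℕ)} {a : Ω} :
    Agr v A a a := fun _ _ => Eq.refl _

theorem Agr.mono {Ω : Type} {v : Ω → ℕ × ℕ → ℕ} {A B : Finset (ℕ × ℕ)} {a b : Ω}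
    (hAB : A ⊆ B) (h : Agr v B a b) : Agr v A a b := fun p hp => h p (hAB hp)

/-- Size of the class of `a`. -/
noncomputable def cnt {Ω : Type} [Fintype Ω] (v : Ω → ℕ × ℕ → ℕ) (A : Finset (ℕ × ℕ))
    (a : Ω) : ℕ := (Finset.univ.filter (fun b => Agr v A a b)).card

/-- Entropy (uniform measure on `Ω`) of the coordinates in `A`. -/
noncomputable def ent {Ω : Type} [Fintype Ω] (v : Ω → ℕ × ℕ → ℕ) (A : Finset (ℕ × ℕ)) : ℝ :=
  (∑ a : Ω, (Real.log (Fintype.card Ω) - Real.log (cnt v A a))) / Fintype.card Ω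

section
variable {Ω : Type} [Fintype Ω] (v : Ω → ℕ × ℕ → ℕ)

theorem cnt_pos (A : Finset (ℕ × ℕ)) (a : Ω) : 0 < cnt v A a :=
  Finset.card_pos.2 ⟨a, by simp [Agr.rfl]⟩

theorem cnt_congr {A : Finset (ℕ × ℕ)} {a b : Ω} (h : Agr v A a b) : cnt v A a = cnt v A b := by
  unfold cnt
  congr 1
  ext c
  simp only [Finset.mem_filter, Finset.mem_univ, true_and]
  exact ⟨fun h' => h.symm.trans h', fun h' => h.trans h'⟩

theorem ent_le_of {A B : Finset (ℕ × ℕ)} (h : ∀ a b, Agr v A a b → Agr v B a b) :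
    ent v B ≤ ent v A := by
  unfold ent
  gcongr with a
  · exact_mod_cast cnt_pos v A a
  · unfold cnt
    apply Finset.card_le_card
    intro b hb
    simp only [Finset.mem_filter, Finset.mem_univ, true_and] at hb ⊢
    exact h _ _ hb

theorem ent_mono {A B : Finset (ℕ × ℕ)} (h : A ⊆ B) : ent v A ≤ ent v B :=
  ent_le_of v (fun _ _ h' => h'.mono h)

theorem ent_empty : ent v ∅ = 0 := by
  unfold ent
  have : ∀ a, cnt v ∅ a = Fintype.card Ω := by
    intro a
    simp [cnt, Agr, Finset.card_univ]
  simp [this]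

theorem ent_of_inj [Nonempty Ω] {A : Finset (ℕ × ℕ)} (h : ∀ a b, Agr v A a b → a = b) :
    ent v A = Real.log (Fintype.card Ω) := by
  have : ∀ a, cnt v A a = 1 := by
    intro a
    unfold cnt
    rw [Finset.card_eq_one]
    refine ⟨a, ?_⟩
    ext b
    simp only [Finset.mem_filter, Finset.mem_univ, true_and, Finset.mem_singleton]
    exact ⟨fun h' => (h _ _ h').symm, fun h' => h' ▸ Agr.rfl⟩
  unfold ent
  simp [this]

theorem ent_nonneg (A : Finset (ℕ × ℕ)) : 0 ≤ ent v A := by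
  rw [← ent_empty v]
  exact ent_mono v (Finset.empty_subset _)

/-- the sum of `1/cnt` over a single class (or nothing) is at most one -/
theorem sum_inv_cnt_le (A : Finset (ℕ × ℕ)) (s : Finset Ω)
    (hs : ∀ a ∈ s, ∀ b ∈ s, Agr v A a b) : ∑ a ∈ s, (1 : ℝ) / cnt v A a ≤ 1 := by
  rcases s.eq_empty_or_nonempty with rfl | ⟨a, ha⟩
  · simp
  · have h1 : ∀ b ∈ s, (1 : ℝ) / cnt v A b = 1 / cnt v A a := by
      intro b hb
      rw [cnt_congr v (hs b hb a ha)]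
    rw [Finset.sum_congr rfl h1, Finset.sum_const, nsmul_eq_mul, mul_one_div]
    have hp : (0 : ℝ) < cnt v A a := by exact_mod_cast cnt_pos v A a
    rw [div_le_one hp]
    have : s.card ≤ cnt v A a := by
      unfold cnt
      apply Finset.card_le_card
      intro b hb
      simp only [Finset.mem_filter, Finset.mem_univ, true_and]
      exact hs a ha b hb
    exact_mod_cast this

theorem ent_single_le (p : ℕ × ℕ) (K : ℕ) (hK : ∀ a, v a p < K) : ent v {p} ≤ K := by
  by_cases hΩ : Nonempty Ω
  swap
  · rw [not_nonempty_iff] at hΩ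
    simp [ent]
  have hc : (0 : ℝ) < Fintype.card Ω := by exact_mod_cast Fintype.card_pos
  unfold ent
  rw [div_le_iff₀ hc]
  have h1 : ∀ a : Ω, Real.log (Fintype.card Ω) - Real.log (cnt v {p} a)
      ≤ Fintype.card Ω * (1 / cnt v {p} a) := by
    intro a
    have hp : (0 : ℝ) < cnt v {p} a := by exact_mod_cast cnt_pos v {p} a
    rw [← Real.log_div hc.ne' hp.ne', mul_one_div]
    have := Real.log_le_sub_one_of_pos (div_pos hc hp)
    linarith
  refine (Finset.sum_le_sum fun a _ => h1 a).trans ?_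
  rw [← Finset.mul_sum, mul_comm]
  gcongr
  have h2 : ∑ a : Ω, (1 : ℝ) / cnt v {p} a
      = ∑ k ∈ Finset.range K, ∑ a ∈ Finset.univ.filter (fun a => v a p = k),
        (1 : ℝ) / cnt v {p} a := by
    rw [Finset.sum_fiberwise_of_maps_to]
    intro a _
    exact Finset.mem_range.2 (hK a)
  rw [h2]
  calc _ ≤ ∑ k ∈ Finset.range K, (1 : ℝ) := by
        apply Finset.sum_le_sum
        intro k _
        apply sum_inv_cnt_le
        intro a ha b hb q hq
        simp only [Finset.mem_filter, Finset.mem_univ, true_and] at ha hb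
        rw [Finset.mem_singleton] at hq
        rw [hq, ha, hb]
    _ = K := by simp

theorem ent_submod (A B C : Finset (ℕ × ℕ)) :
    ent v (A ∪ B ∪ C) + ent v C ≤ ent v (A ∪ C) + ent v (B ∪ C) := by
  unfold ent
  rw [← add_div, ← add_div]
  refine div_le_div_of_nonneg_right ?_ (Nat.cast_nonneg _)
  rw [← Finset.sum_add_distrib, ← Finset.sum_add_distrib, ← sub_nonneg, ← Finset.sum_sub_distrib]
  set D := A ∪ B ∪ C
  have key : ∀ a : Ω, (1 : ℝ) - cnt v (A ∪ C) a * cnt v (B ∪ C) a * (1 / cnt v D a) *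
      (1 / cnt v C a) ≤
      Real.log (Fintype.card Ω) - Real.log (cnt v (A ∪ C) a) +
        (Real.log (Fintype.card Ω) - Real.log (cnt v (B ∪ C) a)) -
      (Real.log (Fintype.card Ω) - Real.log (cnt v D a) +
        (Real.log (Fintype.card Ω) - Real.log (cnt v C a))) := by
    intro a
    have h1 : (0 : ℝ) < cnt v (A ∪ C) a := by exact_mod_cast cnt_pos v _ a
    have h2 : (0 : ℝ) < cnt v (B ∪ C) a := by exact_mod_cast cnt_pos v _ a
    have h3 : (0 : ℝ) < cnt v D a := by exact_mod_cast cnt_pos v _ a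
    have h4 : (0 : ℝ) < cnt v C a := by exact_mod_cast cnt_pos v _ a
    have h5 := Real.log_le_sub_one_of_pos (x := cnt v (A ∪ C) a * cnt v (B ∪ C) a *
      (1 / cnt v D a) * (1 / cnt v C a)) (by positivity)
    rw [Real.log_mul (by positivity) (by positivity), Real.log_mul (by positivity) (by positivity),
      Real.log_mul (by positivity) (by positivity), one_div, one_div, Real.log_inv,
      Real.log_inv] at h5
    rw [one_div, one_div]
    linarith
  refine le_trans ?_ (Finset.sum_le_sum fun a _ => key a)
  rw [Finset.sum_sub_distrib, sub_nonneg]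
  -- rewrite products of counts as sums of indicator functions
  have hind : ∀ (E : Finset (ℕ × ℕ)) (a : Ω),
      (cnt v E a : ℝ) = ∑ b : Ω, if Agr v E a b then (1 : ℝ) else 0 := by
    intro E a
    rw [Finset.sum_boole]
    rfl
  have hAC : C ⊆ A ∪ C := Finset.subset_union_right
  have hBC : C ⊆ B ∪ C := Finset.subset_union_right
  calc ∑ a : Ω, (cnt v (A ∪ C) a : ℝ) * cnt v (B ∪ C) a * (1 / cnt v D a) * (1 / cnt v C a)
      = ∑ a : Ω, ∑ b : Ω, ∑ c : Ω, (if Agr v (A ∪ C) a b then (1 : ℝ) else 0) *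
          (if Agr v (B ∪ C) a c then (1 : ℝ) else 0) * (1 / cnt v D a) * (1 / cnt v C a) := by
        refine Finset.sum_congr rfl fun a _ => ?_
        rw [hind (A ∪ C) a, hind (B ∪ C) a, Finset.sum_mul_sum, Finset.sum_mul, Finset.sum_mul]
        refine Finset.sum_congr rfl fun b _ => ?_
        rw [Finset.sum_mul, Finset.sum_mul]
    _ = ∑ b : Ω, ∑ c : Ω, ∑ a : Ω, (if Agr v (A ∪ C) a b then (1 : ℝ) else 0) *
          (if Agr v (B ∪ C) a c then (1 : ℝ) else 0) * (1 / cnt v D a) * (1 / cnt v C a) := by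
        rw [Finset.sum_comm]
        refine Finset.sum_congr rfl fun b _ => ?_
        rw [Finset.sum_comm]
    _ ≤ ∑ b : Ω, ∑ c : Ω, (if Agr v C b c then (1 : ℝ) else 0) * (1 / cnt v C b) := by
        refine Finset.sum_le_sum fun b _ => Finset.sum_le_sum fun c _ => ?_
        by_cases hbc : Agr v C b c
        · rw [if_pos hbc, one_mul]
          calc _ = ∑ a ∈ Finset.univ.filter (fun a => Agr v (A ∪ C) a b ∧ Agr v (B ∪ C) a c),
                  (1 / cnt v D a : ℝ) * (1 / cnt v C b) := by
                rw [Finset.sum_filter]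
                refine Finset.sum_congr rfl fun a _ => ?_
                by_cases h1 : Agr v (A ∪ C) a b
                · by_cases h2 : Agr v (B ∪ C) a c
                  · simp [h1, h2, cnt_congr v (h1.mono hAC)]
                  · simp [h2]
                · simp [h1]
            _ = (∑ a ∈ Finset.univ.filter (fun a => Agr v (A ∪ C) a b ∧ Agr v (B ∪ C) a c),
                  (1 / cnt v D a : ℝ)) * (1 / cnt v C b) := by rw [Finset.sum_mul]
            _ ≤ 1 * (1 / cnt v C b) := by
                gcongr
                apply sum_inv_cnt_le
                intro a ha a' ha'
                simp only [Finset.mem_filter, Finset.mem_univ, true_and] at ha ha'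
                have e1 := ha.1.trans ha'.1.symm
                have e2 := ha.2.trans ha'.2.symm
                intro p hp
                simp only [D, Finset.mem_union] at hp
                rcases hp with (hp | hp) | hp
                · exact e1 p (by simp [hp])
                · exact e2 p (by simp [hp])
                · exact e1 p (by simp [hp])
            _ = _ := one_mul _
        · rw [if_neg hbc, zero_mul]
          apply le_of_eq
          apply Finset.sum_eq_zero
          intro a _
          by_cases h1 : Agr v (A ∪ C) a b
          · have h2 : ¬ Agr v (B ∪ C) a c := fun h2 =>
              hbc ((h1.mono hAC).symm.trans (h2.mono hBC))
            simp [h2]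
          · simp [h1]
    _ = ∑ b : Ω, (1 : ℝ) := by
        refine Finset.sum_congr rfl fun b _ => ?_
        rw [← Finset.sum_mul, ← hind]
        have h4 : (0 : ℝ) < cnt v C b := by exact_mod_cast cnt_pos v _ b
        field_simp
end

/-! ### Abstract shift-invariant entropy functionals -/

/-- Shift of a coordinate set in time. -/
def sh (i : ℕ) (A : Finset (ℕ × ℕ)) : Finset (ℕ × ℕ) := A.image (fun p => (p.1, p.2 + i))

/-- Window `⋃_{a ≤ i < b} (A + i)`. -/
def win (A : Finset (ℕ × ℕ)) (a b : ℕ) : Finset (ℕ × ℕ) :=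
  (Finset.Ico a b).biUnion (fun i => sh i A)

theorem mem_sh {i : ℕ} {A : Finset (ℕ × ℕ)} {p : ℕ × ℕ} :
    p ∈ sh i A ↔ ∃ t, (p.1, t) ∈ A ∧ p.2 = t + i := by
  simp only [sh, Finset.mem_image]
  constructor
  · rintro ⟨⟨l, t⟩, h, rfl⟩
    exact ⟨t, h, rfl⟩
  · rintro ⟨t, h, h'⟩
    exact ⟨(p.1, t), h, by rw [← h']⟩

theorem mem_win {A : Finset (ℕ × ℕ)} {a b : ℕ} {p : ℕ × ℕ} :
    p ∈ win A a b ↔ ∃ i, a ≤ i ∧ i < b ∧ ∃ t, (p.1, t) ∈ A ∧ p.2 = t + i := by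
  simp only [win, Finset.mem_biUnion, Finset.mem_Ico, mem_sh, and_assoc]

theorem sh_union (i : ℕ) (A B : Finset (ℕ × ℕ)) : sh i (A ∪ B) = sh i A ∪ sh i B :=
  Finset.image_union _ _

theorem sh_sh (i j : ℕ) (A : Finset (ℕ × ℕ)) : sh i (sh j A) = sh (j + i) A := by
  ext p
  simp only [mem_sh]
  constructor
  · rintro ⟨t, ⟨s, h, h'⟩, h''⟩
    exact ⟨s, h, by omega⟩
  · rintro ⟨s, h, h'⟩
    exact ⟨s + j, ⟨s, h, rfl⟩, by omega⟩

theorem sh_zero (A : Finset (ℕ × ℕ)) : sh 0 A = A := by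
  simp [sh]

theorem sh_win (i : ℕ) (A : Finset (ℕ × ℕ)) (a b : ℕ) :
    sh i (win A a b) = win A (a + i) (b + i) := by
  ext p
  simp only [mem_sh, mem_win]
  constructor
  · rintro ⟨t, ⟨j, h1, h2, s, h3, h4⟩, h5⟩
    exact ⟨j + i, by omega, by omega, s, h3, by omega⟩
  · rintro ⟨j, h1, h2, s, h3, h4⟩
    exact ⟨s + (j - i), ⟨j - i, by omega, by omega, s, h3, rfl⟩, by omega⟩

theorem win_split (A : Finset (ℕ × ℕ)) {a b c : ℕ} (hab : a ≤ b) (hbc : b ≤ c) :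
    win A a c = win A a b ∪ win A b c := by
  unfold win
  rw [← Finset.Ico_union_Ico_eq_Ico hab hbc, Finset.union_biUnion]

theorem win_union (A B : Finset (ℕ × ℕ)) (a b : ℕ) :
    win (A ∪ B) a b = win A a b ∪ win B a b := by
  ext p
  simp only [mem_win, Finset.mem_union]
  constructor
  · rintro ⟨i, h1, h2, t, h3 | h3, h4⟩
    · exact Or.inl ⟨i, h1, h2, t, h3, h4⟩
    · exact Or.inr ⟨i, h1, h2, t, h3, h4⟩
  · rintro (⟨i, h1, h2, t, h3, h4⟩ | ⟨i, h1, h2, t, h3, h4⟩)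
    · exact ⟨i, h1, h2, t, Or.inl h3, h4⟩
    · exact ⟨i, h1, h2, t, Or.inr h3, h4⟩

theorem win_mono (A : Finset (ℕ × ℕ)) {a b a' b' : ℕ} (h : a' ≤ a) (h' : b ≤ b') :
    win A a b ⊆ win A a' b' :=
  Finset.biUnion_subset_biUnion_of_subset_left _ (Finset.Ico_subset_Ico h h')

theorem win_zero_one (A : Finset (ℕ × ℕ)) : win A 0 1 = A := by
  simp [win, sh_zero]

theorem win_self (A : Finset (ℕ × ℕ)) (a : ℕ) : win A a a = ∅ := by
  simp [win]

theorem win_succ (A : Finset (ℕ × ℕ)) (n : ℕ) : win A 0 (n + 1) = A ∪ win A 1 (n + 1) := by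
  rw [win_split A (Nat.zero_le 1) (by omega), win_zero_one]

/-- Abstract properties of a stationary entropy functional. -/
structure IsEnt (h : Finset (ℕ × ℕ) → ℝ) : Prop where
  empty : h ∅ = 0
  mono : ∀ A B, A ⊆ B → h A ≤ h B
  submod : ∀ A B C, h (A ∪ B ∪ C) + h C ≤ h (A ∪ C) + h (B ∪ C)
  shift : ∀ A, h (sh 1 A) = h A

namespace IsEnt
variable {h : Finset (ℕ × ℕ) → ℝ}

theorem cond_anti (hh : IsEnt h) (A : Finset (ℕ × ℕ)) {B C : Finset (ℕ × ℕ)} (hBC : B ⊆ C) :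
    h (A ∪ C) - h C ≤ h (A ∪ B) - h B := by
  have := hh.submod A C B
  rw [Finset.union_assoc, Finset.union_eq_left.2 hBC] at this
  linarith

/-- block entropy increments -/
theorem step (hh : IsEnt h) (A : Finset (ℕ × ℕ)) (n : ℕ) :
    h (win A 0 (n + 1)) - h (win A 0 n) = h (A ∪ win A 1 (n + 1)) - h (win A 1 (n + 1)) := by
  have := hh.shift (win A 0 n)
  rw [sh_win, zero_add] at this
  rw [this, win_succ]

theorem step_anti (hh : IsEnt h) (A : Finset (ℕ × ℕ)) : Antitone fun n =>
    h (win A 0 (n + 1)) - h (win A 0 n) := by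
  intro m n hmn
  simp only [hh.step]
  exact hh.cond_anti _ (win_mono _ le_rfl (by omega))

theorem step_nonneg (hh : IsEnt h) (A : Finset (ℕ × ℕ)) (n : ℕ) :
    0 ≤ h (win A 0 (n + 1)) - h (win A 0 n) :=
  sub_nonneg.2 (hh.mono _ _ (win_mono _ le_rfl (by omega)))

/-- existence of the entropy rate -/
theorem exists_rate (hh : IsEnt h) (A : Finset (ℕ × ℕ)) : ∃ r : ℝ,
    (∀ n, r ≤ h (win A 0 (n + 1)) - h (win A 0 n)) ∧
    ∀ η > 0, ∃ n₀, ∀ n ≥ n₀, h (win A 0 (n + 1)) - h (win A 0 n) < r + η := by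
  set d := fun n => h (win A 0 (n + 1)) - h (win A 0 n) with hd
  have hb : BddBelow (Set.range d) := ⟨0, by rintro _ ⟨n, rfl⟩; exact hh.step_nonneg A n⟩
  refine ⟨⨅ n, d n, fun n => ciInf_le hb n, fun η hη => ?_⟩
  obtain ⟨n₀, hn₀⟩ := exists_lt_of_ciInf_lt (show (⨅ n, d n) < (⨅ n, d n) + η by linarith)
  exact ⟨n₀, fun n hn => (hh.step_anti A hn).trans_lt hn₀⟩

theorem le_block (A : Finset (ℕ × ℕ)) (r : ℝ)
    (hr : ∀ n, r ≤ h (win A 0 (n + 1)) - h (win A 0 n)) (N L : ℕ) :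
    h (win A 0 N) + L * r ≤ h (win A 0 (L + N)) := by
  induction L with
  | zero => simp
  | succ L ih =>
    have := hr (L + N)
    rw [show L + 1 + N = L + N + 1 by omega]
    push_cast
    linarith

theorem block_le (A : Finset (ℕ × ℕ)) (r : ℝ) (n₀ : ℕ)
    (hr : ∀ n ≥ n₀, h (win A 0 (n + 1)) - h (win A 0 n) < r) (L : ℕ) :
    h (win A 0 (L + n₀)) ≤ h (win A 0 n₀) + L * r := by
  induction L with
  | zero => simp
  | succ L ih =>
    have := hr (L + n₀) (by omega)
    rw [show L + 1 + n₀ = L + n₀ + 1 by omega]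
    push_cast
    linarith

/-- Key lemma: the remote future of `Q` gives almost no information on `R`. -/
theorem key (hh : IsEnt h) (R Q : Finset (ℕ × ℕ)) (r : ℝ)
    (hr : ∀ n, r ≤ h (win R 0 (n + 1)) - h (win R 0 n)) (η : ℝ) (hη : 0 < η) :
    ∃ n, ∀ N, r - η ≤ h (R ∪ (win R 1 N ∪ win Q n N)) - h (win R 1 N ∪ win Q n N) := by
  by_contra hcon
  push Not at hcon
  choose Nf hNf using hcon
  obtain ⟨s, hs1, hs2⟩ := hh.exists_rate (R ∪ Q)
  obtain ⟨n₀, hn₀⟩ := hs2 (η / 2) (by linarith)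
  have hbl := block_le (R ∪ Q) _ n₀ hn₀
  -- lower bound on blocks from the failure
  have low : ∀ L : ℕ, L * (s + η) ≤ h (win (R ∪ Q) 0 L) := by
    intro L
    set N := (Finset.range (L + 1)).sup Nf with hN
    have hNle : ∀ n ≤ L, Nf n ≤ N := fun n hn =>
      Finset.le_sup (f := Nf) (Finset.mem_range.2 (by omega))
    have hu : ∀ n ≤ L, h (win R 0 (n + N) ∪ win Q n (n + N)) ≤
        h (win (R ∪ Q) 0 N) + n * (r - η) := by
      intro n
      induction n with
      | zero => intro _; simp [win_union]
      | succ n ih =>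
        intro hn
        have ih' := ih (by omega)
        have h1 := hh.shift (win R 0 (n + N) ∪ win Q n (n + N))
        rw [sh_union, sh_win, sh_win, zero_add] at h1
        have h2 := hh.cond_anti R (B := win R 1 (Nf (n + 1)) ∪ win Q (n + 1) (Nf (n + 1)))
          (C := win R 1 (n + N + 1) ∪ win Q (n + 1) (n + N + 1)) (by
            have := hNle (n + 1) hn
            exact Finset.union_subset_union (win_mono _ le_rfl (by omega))
              (win_mono _ le_rfl (by omega)))
        have h3 := hNf (n + 1)
        rw [show n + 1 + N = n + N + 1 by omega, win_succ, Finset.union_assoc]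
        push_cast
        linarith
    have h1 := hu L le_rfl
    have h2 := le_block (R ∪ Q) s hs1 N L
    have h3 := le_block R r hr 0 L
    rw [add_zero, win_self, hh.empty] at h3
    have h4 := hh.submod (win Q 0 L) (win R 0 (L + N) ∪ win Q L (L + N)) (win R 0 L)
    have e1 : win Q 0 L ∪ (win R 0 (L + N) ∪ win Q L (L + N)) ∪ win R 0 L
        = win (R ∪ Q) 0 (L + N) := by
      rw [win_union, win_split Q (Nat.zero_le L) (show L ≤ L + N by omega),
        win_split R (Nat.zero_le L) (show L ≤ L + N by omega)]
      ext p
      simp only [Finset.mem_union]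
      tauto
    have e2 : win Q 0 L ∪ win R 0 L = win (R ∪ Q) 0 L := by
      rw [win_union, Finset.union_comm]
    have e3 : win R 0 (L + N) ∪ win Q L (L + N) ∪ win R 0 L
        = win R 0 (L + N) ∪ win Q L (L + N) := by
      apply Finset.union_eq_left.2
      exact (win_mono _ le_rfl (by omega)).trans Finset.subset_union_left
    rw [e1, e2, e3] at h4
    linarith
  obtain ⟨L, hL⟩ := exists_nat_gt (h (win (R ∪ Q) 0 n₀) / (η / 2) + n₀ * |s|/ (η / 2))
  have h1 := hbl L
  have h2 := low (L + n₀)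
  push_cast at h2
  rw [← add_div, div_lt_iff₀ (by linarith)] at hL
  have h3 : - ((n₀ : ℝ) * |s|) ≤ n₀ * s := by
    have := neg_abs_le s
    have h0 : (0 : ℝ) ≤ n₀ := Nat.cast_nonneg _
    nlinarith
  have h4 : (0 : ℝ) ≤ n₀ * η := by positivity
  nlinarith

/-- The coordinates `V` leave positive uncertainty on the coordinate `w`. -/
def Good (h : Finset (ℕ × ℕ) → ℝ) (w : ℕ × ℕ) (V : Finset (ℕ × ℕ)) : Prop :=
  ∃ c > 0, ∀ N, c ≤ h ({w} ∪ (V ∪ win ({w} ∪ V) 1 N)) - h (V ∪ win ({w} ∪ V) 1 N)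

theorem good_step (hh : IsEnt h) (w : ℕ × ℕ) (V : Finset (ℕ × ℕ)) (hV : Good h w V) (q : ℕ) :
    ∃ n, Good h w (V ∪ {(q, n)}) := by
  obtain ⟨c, hc, hV⟩ := hV
  set R := {w} ∪ V with hR
  obtain ⟨r, hr1, hr2⟩ := hh.exists_rate R
  obtain ⟨n₀, hn₀⟩ := hr2 (c / 4) (by linarith)
  obtain ⟨n, hn⟩ := hh.key R {(q, 0)} r hr1 (c / 4) (by linarith)
  refine ⟨n, c / 2, by linarith, fun N => ?_⟩
  set N' := n + N + n₀ with hN'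
  set B := win R 1 (N' + 1) ∪ win {(q, 0)} n (N' + 1) with hB
  have hsub : V ∪ {(q, n)} ∪ win ({w} ∪ (V ∪ {(q, n)})) 1 N ⊆ V ∪ B := by
    intro p hp
    simp only [hB, hR, Finset.mem_union, mem_win, Finset.mem_singleton, Prod.mk.injEq] at hp ⊢
    rcases hp with (hp | hp) | ⟨i, h1, h2, t, hp | hp | hp, h3⟩
    · exact Or.inl hp
    · subst hp
      exact Or.inr (Or.inr ⟨n, le_rfl, by omega, 0, ⟨rfl, rfl⟩, by simp⟩)
    · exact Or.inr (Or.inl ⟨i, h1, by omega, t, Or.inl hp, h3⟩)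
    · exact Or.inr (Or.inl ⟨i, h1, by omega, t, Or.inr hp, h3⟩)
    · exact Or.inr (Or.inr ⟨n + i, by omega, by omega, 0, ⟨hp.1, rfl⟩, by omega⟩)
  have h0 := hh.cond_anti {w} hsub
  have h1 := hn (N' + 1)
  have h2 := hh.cond_anti V (B := win R 1 (N' + 1)) (C := B) Finset.subset_union_left
  have h3 := hV (N' + 1)
  have h4 := hn₀ N' (by omega)
  rw [hh.step] at h4
  have e1 : {w} ∪ (V ∪ B) = R ∪ B := by rw [hR, Finset.union_assoc]
  have e2 : {w} ∪ (V ∪ win R 1 (N' + 1)) = R ∪ win R 1 (N' + 1) := by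
    rw [hR, Finset.union_assoc]
  rw [e1] at h0
  rw [e2] at h3
  linarith

end IsEnt

/-! ### A combinatorial tree lemma -/

section tree
variable {X : Type*}

/-- `F` codes a subcover of `S` by sets of the form `⋂_{i<m} T^{-i} (U or V)ᶜ`. -/
def CovBy (T : X → X) (U V : Set X) (S : Set X) (m : ℕ) (F : Finset (ℕ → Bool)) : Prop :=
  ∀ x ∈ S, ∃ τ ∈ F, ∀ i < m, T^[i] x ∉ (if τ i then V else U)

/-- `G` is a tree-like family of words realized in `S`; the letter `2` means no constraint. -/
structure TreeFam (T : X → X) (U V : Set X) (S : Set X) (m : ℕ) (G : Finset (ℕ → ℕ)) : Prop where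
  lt : ∀ w ∈ G, ∀ i, w i < 3
  far : ∀ w ∈ G, ∀ i, m ≤ i → w i = 2
  real : ∀ w ∈ G, ∃ x ∈ S, ∀ i, (w i = 0 → T^[i] x ∈ U) ∧ (w i = 1 → T^[i] x ∈ V)
  det : ∀ w ∈ G, ∀ w' ∈ G, ∀ i, (∀ j, i < j → w j = w' j) → (w i = 2 ↔ w' i = 2)

theorem TreeFam.mono {T : X → X} {U V S S' : Set X} {m : ℕ} {G : Finset (ℕ → ℕ)}
    (h : TreeFam T U V S m G) (hS : S ⊆ S') : TreeFam T U V S' (m + 1) G where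
  lt := h.lt
  far := fun w hw i hi => h.far w hw i (by omega)
  real := fun w hw => by
    obtain ⟨x, hx, h'⟩ := h.real w hw
    exact ⟨x, hS hx, h'⟩
  det := h.det

theorem cov_join {T : X → X} {U V S : Set X} {m : ℕ} {F F' : Finset (ℕ → Bool)} (b : Bool)
    (P : Set X) (hP : ∀ x ∈ P, x ∉ (if b then V else U))
    (hPc : ∀ x ∉ P, x ∉ (if !b then V else U))
    (h : CovBy T U V (S ∩ T^[m] ⁻¹' P) m F) (h' : CovBy T U V (S ∩ (T^[m] ⁻¹' P)ᶜ) m F') :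
    CovBy T U V S (m + 1)
      (F.image (fun τ => Function.update τ m b) ∪ F'.image (fun τ => Function.update τ m !b)) := by
  intro x hx
  by_cases hxP : T^[m] x ∈ P
  · obtain ⟨τ, hτ, h1⟩ := h x ⟨hx, hxP⟩
    refine ⟨Function.update τ m b, Finset.mem_union_left _ (Finset.mem_image_of_mem _ hτ), ?_⟩
    intro i hi
    rcases Nat.lt_succ_iff_lt_or_eq.1 hi with h2 | rfl
    · rw [Function.update_of_ne h2.ne]
      exact h1 i h2
    · rw [Function.update_self]
      exact hP _ hxP
  · obtain ⟨τ, hτ, h1⟩ := h' x ⟨hx, hxP⟩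
    refine ⟨Function.update τ m !b, Finset.mem_union_right _ (Finset.mem_image_of_mem _ hτ), ?_⟩
    intro i hi
    rcases Nat.lt_succ_iff_lt_or_eq.1 hi with h2 | rfl
    · rw [Function.update_of_ne h2.ne]
      exact h1 i h2
    · rw [Function.update_self]
      exact hPc _ hxP

theorem tree_join {T : X → X} {U V S : Set X} {m : ℕ} {G₀ G₁ : Finset (ℕ → ℕ)}
    (h₀ : TreeFam T U V (S ∩ T^[m] ⁻¹' U) m G₀) (h₁ : TreeFam T U V (S ∩ T^[m] ⁻¹' V) m G₁) :
    ∃ G, TreeFam T U V S (m + 1) G ∧ G.card = G₀.card + G₁.card := by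
  have inj : ∀ (G : Finset (ℕ → ℕ)) (b : ℕ), (∀ w ∈ G, ∀ i, m ≤ i → w i = 2) →
      (G.image (fun w => Function.update w m b)).card = G.card := by
    intro G b hG
    apply Finset.card_image_of_injOn
    intro w hw w' hw' he
    funext i
    by_cases hi : i = m
    · rw [hi, hG w hw m le_rfl, hG w' hw' m le_rfl]
    · have := congrFun he i
      simpa [Function.update_of_ne hi] using this
  refine ⟨G₀.image (fun w => Function.update w m 0) ∪ G₁.image (fun w => Function.update w m 1),
    ?_, ?_⟩
  · have spec : ∀ w ∈ G₀.image (fun w => Function.update w m 0) ∪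
        G₁.image (fun w => Function.update w m 1),
        (∃ u ∈ G₀, w = Function.update u m 0) ∨ (∃ u ∈ G₁, w = Function.update u m 1) := by
      intro w hw
      rcases Finset.mem_union.1 hw with h | h
      · obtain ⟨u, hu, rfl⟩ := Finset.mem_image.1 h
        exact Or.inl ⟨u, hu, rfl⟩
      · obtain ⟨u, hu, rfl⟩ := Finset.mem_image.1 h
        exact Or.inr ⟨u, hu, rfl⟩
    constructor
    · intro w hw i
      by_cases hi : i = m
      · rcases spec w hw with ⟨u, hu, rfl⟩ | ⟨u, hu, rfl⟩ <;> simp [hi]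
      · rcases spec w hw with ⟨u, hu, rfl⟩ | ⟨u, hu, rfl⟩ <;> rw [Function.update_of_ne hi]
        · exact h₀.lt u hu i
        · exact h₁.lt u hu i
    · intro w hw i hi
      have hi' : i ≠ m := by omega
      rcases spec w hw with ⟨u, hu, rfl⟩ | ⟨u, hu, rfl⟩ <;> rw [Function.update_of_ne hi']
      · exact h₀.far u hu i (by omega)
      · exact h₁.far u hu i (by omega)
    · intro w hw
      rcases spec w hw with ⟨u, hu, rfl⟩ | ⟨u, hu, rfl⟩
      · obtain ⟨x, hx, h⟩ := h₀.real u hu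
        refine ⟨x, hx.1, fun i => ?_⟩
        by_cases hi : i = m
        · subst hi
          simpa using hx.2
        · rw [Function.update_of_ne hi]
          exact h i
      · obtain ⟨x, hx, h⟩ := h₁.real u hu
        refine ⟨x, hx.1, fun i => ?_⟩
        by_cases hi : i = m
        · subst hi
          simpa using hx.2
        · rw [Function.update_of_ne hi]
          exact h i
    · -- determinacy
      have same : ∀ (G : Finset (ℕ → ℕ)) (S' : Set X) (b : ℕ), b ≠ 2 → TreeFam T U V S' m G →
          ∀ u ∈ G, ∀ u' ∈ G, ∀ i,
          (∀ j, i < j → Function.update u m b j = Function.update u' m b j) →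
          (Function.update u m b i = 2 ↔ Function.update u' m b i = 2) := by
        intro G S' b hb hG u hu u' hu' i hj
        by_cases hi : i = m
        · subst hi
          simp
        · rw [Function.update_of_ne hi, Function.update_of_ne hi]
          apply hG.det u hu u' hu' i
          intro j hij
          by_cases hjm : j = m
          · rw [hjm, hG.far u hu m le_rfl, hG.far u' hu' m le_rfl]
          · have := hj j hij
            rwa [Function.update_of_ne hjm, Function.update_of_ne hjm] at this
      have diff : ∀ u ∈ G₀, ∀ u' ∈ G₁, ∀ i,
          (∀ j, i < j → Function.update u m 0 j = Function.update u' m 1 j) →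
          (Function.update u m 0 i = 2 ↔ Function.update u' m 1 i = 2) := by
        intro u hu u' hu' i hj
        rcases lt_trichotomy i m with hi | hi | hi
        · have := hj m hi
          simp at this
        · subst hi
          simp
        · rw [Function.update_of_ne hi.ne', Function.update_of_ne hi.ne',
            h₀.far u hu i hi.le, h₁.far u' hu' i hi.le]
      intro w hw w' hw' i hj
      rcases spec w hw with ⟨u, hu, rfl⟩ | ⟨u, hu, rfl⟩ <;>
        rcases spec w' hw' with ⟨u', hu', rfl⟩ | ⟨u', hu', rfl⟩
      · exact same G₀ _ 0 (by norm_num) h₀ u hu u' hu' i hj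
      · exact diff u hu u' hu' i hj
      · exact (diff u' hu' u hu i (fun j hij => (hj j hij).symm)).symm
      · exact same G₁ _ 1 (by norm_num) h₁ u hu u' hu' i hj
  · rw [Finset.card_union_of_disjoint, inj _ _ h₀.far, inj _ _ h₁.far]
    rw [Finset.disjoint_left]
    intro w hw hw'
    obtain ⟨u, hu, rfl⟩ := Finset.mem_image.1 hw
    obtain ⟨u', hu', he⟩ := Finset.mem_image.1 hw'
    have := congrFun he m
    simp at this

theorem tree_aux (a : ℕ) {f f' d g g' e : ℝ} {ρ : ℝ} (hρ0 : 0 ≤ ρ) (hg : 0 ≤ g) (hg' : 0 ≤ g')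
    (hρ : ρ = 1 - (1 / 2) ^ a) (m : ℕ) (hf : f * ρ ^ m ≤ g ^ a) (hf' : f' * ρ ^ m ≤ g' ^ a)
    (hd : d * ρ ^ m ≤ e ^ a) (hff' : f ≤ f') (hd0 : 0 ≤ d) (hf0 : 0 ≤ f) :
    (f + d) * ρ ^ (m + 1) ≤ e ^ a ∨ (f + d) * ρ ^ (m + 1) ≤ (g + g') ^ a := by
  have hp : 0 ≤ ρ ^ m := pow_nonneg hρ0 m
  by_cases h : f ≤ (1 / 2) ^ a * (f + d)
  · left
    have : (f + d) * ρ ≤ d := by rw [hρ]; linarith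
    calc (f + d) * ρ ^ (m + 1) = (f + d) * ρ * ρ ^ m := by ring
      _ ≤ d * ρ ^ m := by gcongr
      _ ≤ _ := hd
  · right
    push Not at h
    have h2 : (f + d) ≤ 2 ^ a * f := by
      have h3 : (2 : ℝ) ^ a * ((1 / 2) ^ a * (f + d)) ≤ 2 ^ a * f := by gcongr
      rwa [← mul_assoc, ← mul_pow, show (2 : ℝ) * (1 / 2) = 1 by norm_num, one_pow, one_mul] at h3
    have hρ1 : ρ ≤ 1 := by rw [hρ]; linarith [pow_nonneg (show (0 : ℝ) ≤ 1 / 2 by norm_num) a]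
    have hm : f * ρ ^ m ≤ (min g g') ^ a := by
      rcases le_total g g' with hgg | hgg
      · rwa [min_eq_left hgg]
      · rw [min_eq_right hgg]
        exact le_trans (by gcongr) hf'
    have h0 : 0 ≤ min g g' := le_min hg hg'
    calc (f + d) * ρ ^ (m + 1) ≤ (f + d) * ρ ^ m := by
          have : 0 ≤ f + d := by linarith
          exact mul_le_mul_of_nonneg_left (pow_le_pow_of_le_one hρ0 hρ1 (Nat.le_succ m)) this
      _ ≤ 2 ^ a * f * ρ ^ m := by gcongr
      _ = 2 ^ a * (f * ρ ^ m) := by ring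
      _ ≤ 2 ^ a * (min g g') ^ a := by gcongr
      _ = (2 * min g g') ^ a := by rw [mul_pow]
      _ ≤ (g + g') ^ a := by
          gcongr
          linarith [min_le_left g g', min_le_right g g']

theorem tree (T : X → X) (U V : Set X) (hUV : Disjoint U V) (a : ℕ) (ha : 1 ≤ a) (m : ℕ) :
    ∀ S : Set X, ∃ F G, CovBy T U V S m F ∧ TreeFam T U V S m G ∧
      (F.card : ℝ) * (1 - (1 / 2) ^ a) ^ m ≤ (G.card : ℝ) ^ a := by
  have hρ0 : (0 : ℝ) ≤ 1 - (1 / 2) ^ a := by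
    have : ((1 : ℝ) / 2) ^ a ≤ 1 := pow_le_one₀ (by norm_num) (by norm_num)
    linarith
  induction m with
  | zero =>
    intro S
    rcases S.eq_empty_or_nonempty with rfl | ⟨x, hx⟩
    · refine ⟨∅, ∅, by simp [CovBy], ⟨by simp, by simp, by simp, by simp⟩, ?_⟩
      simp
    · refine ⟨{fun _ => true}, {fun _ => 2}, by simp [CovBy], ⟨by simp, by simp, ?_, by simp⟩, ?_⟩
      · intro w hw
        rw [Finset.mem_singleton] at hw
        subst hw
        exact ⟨x, hx, by simp⟩
      · simp
  | succ m ih =>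
    intro S
    obtain ⟨F₀, G₀, hF₀, hG₀, h₀⟩ := ih (S ∩ T^[m] ⁻¹' U)
    obtain ⟨F₁, G₁, hF₁, hG₁, h₁⟩ := ih (S ∩ T^[m] ⁻¹' V)
    obtain ⟨F₂, G₂, hF₂, hG₂, h₂⟩ := ih (S ∩ (T^[m] ⁻¹' U)ᶜ)
    obtain ⟨F₃, G₃, hF₃, hG₃, h₃⟩ := ih (S ∩ (T^[m] ⁻¹' V)ᶜ)
    obtain ⟨G, hG, hGc⟩ := tree_join hG₀ hG₁
    have hcard : ∀ (F F' : Finset (ℕ → Bool)) (b : Bool),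
        ((F.image (fun τ => Function.update τ m b) ∪
          F'.image (fun τ => Function.update τ m !b)).card : ℝ) ≤ F.card + F'.card := by
      intro F F' b
      have h1 := Finset.card_union_le (F.image (fun τ => Function.update τ m b))
        (F'.image (fun τ => Function.update τ m !b))
      have h2 : (F.image (fun τ => Function.update τ m b)).card ≤ F.card := Finset.card_image_le
      have h3 : (F'.image (fun τ => Function.update τ m !b)).card ≤ F'.card :=
        Finset.card_image_le
      exact_mod_cast h1.trans (add_le_add h2 h3)
    have c1 := cov_join (T := T) (U := U) (V := V) (S := S) true U
      (fun x hx => by simpa using Set.disjoint_left.1 hUV hx) (fun x hx => by simpa using hx)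
      hF₀ hF₂
    have c2 := cov_join (T := T) (U := U) (V := V) (S := S) false V
      (fun x hx => by simpa using Set.disjoint_right.1 hUV hx) (fun x hx => by simpa using hx)
      hF₁ hF₃
    have hp : (0 : ℝ) ≤ (1 - (1 / 2) ^ a) ^ (m + 1) := pow_nonneg hρ0 _
    rcases le_total (F₀.card : ℝ) F₁.card with hle | hle
    · rcases tree_aux a hρ0 (Nat.cast_nonneg G₀.card) (Nat.cast_nonneg G₁.card) rfl m h₀ h₁ h₂ hle
        (Nat.cast_nonneg _) (Nat.cast_nonneg _) with h | h
      · exact ⟨_, G₂, c1, hG₂.mono Set.inter_subset_left,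
          (mul_le_mul_of_nonneg_right (hcard _ _ _) hp).trans h⟩
      · refine ⟨_, G, c1, hG, (mul_le_mul_of_nonneg_right (hcard _ _ _) hp).trans ?_⟩
        rw [hGc]
        exact_mod_cast h
    · rcases tree_aux a hρ0 (Nat.cast_nonneg G₁.card) (Nat.cast_nonneg G₀.card) rfl m h₁ h₀ h₃ hle
        (Nat.cast_nonneg _) (Nat.cast_nonneg _) with h | h
      · exact ⟨_, G₃, c2, hG₃.mono Set.inter_subset_left,
          (mul_le_mul_of_nonneg_right (hcard _ _ _) hp).trans h⟩
      · refine ⟨_, G, c2, hG, (mul_le_mul_of_nonneg_right (hcard _ _ _) hp).trans ?_⟩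
        rw [hGc, add_comm G₀.card]
        exact_mod_cast h

theorem coverNum_le (T : X → X) (U V : Set X) (m : ℕ) (F : Finset (ℕ → Bool))
    (hF : CovBy T U V Set.univ m F) : coverNum T ![Uᶜ, Vᶜ] m ≤ F.card := by
  apply Nat.sInf_le
  refine ⟨fun j i => if (F.equivFin.symm j : ℕ → Bool) i then 1 else 0, ?_⟩
  rw [Set.eq_univ_iff_forall]
  intro x
  obtain ⟨τ, hτ, h⟩ := hF x (Set.mem_univ _)
  refine Set.mem_iUnion.2 ⟨F.equivFin ⟨τ, hτ⟩, Set.mem_iInter.2 fun i => ?_⟩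
  have := h i i.2
  simp only [Equiv.symm_apply_apply, Set.mem_preimage]
  by_cases hb : τ i
  · simpa [hb] using this
  · simpa [hb] using this

/-- Positive entropy yields exponentially large tree-like families. -/
theorem exists_trees (T : X → X) (U V : Set X) (hUV : Disjoint U V)
    (hpos : 0 < coverEntropyOf T ![Uᶜ, Vᶜ]) :
    ∃ c > 0, ∀ m : ℕ, ∃ G, TreeFam T U V Set.univ (m + 1) G ∧ G.Nonempty ∧
      c * ((m : ℝ) + 1) ≤ Real.log G.card := by
  set h := coverEntropyOf T ![Uᶜ, Vᶜ] with hh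
  obtain ⟨a, ha1, ha⟩ : ∃ a : ℕ, 1 ≤ a ∧ Real.exp (-(h / 2)) ≤ 1 - (1 / 2) ^ a := by
    have h1 : Real.exp (-(h / 2)) < 1 := by
      rw [Real.exp_lt_one_iff]; linarith
    obtain ⟨a, ha⟩ := exists_pow_lt_of_lt_one (sub_pos.2 h1) (show (1 / 2 : ℝ) < 1 by norm_num)
    refine ⟨a + 1, by omega, ?_⟩
    have : (1 / 2 : ℝ) ^ (a + 1) ≤ (1 / 2) ^ a :=
      pow_le_pow_of_le_one (by norm_num) (by norm_num) (by omega)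
    linarith
  have ha0 : (0 : ℝ) < a := by exact_mod_cast ha1
  refine ⟨h / 2 / a, by positivity, fun m => ?_⟩
  obtain ⟨F, G, hF, hG, hle⟩ := tree T U V hUV a ha1 (m + 1) Set.univ
  have hm : (0 : ℝ) < (m : ℝ) + 1 := by positivity
  have hbdd : BddBelow (Set.range fun n : ℕ =>
      Real.log (coverNum T ![Uᶜ, Vᶜ] (n + 1)) / ((n : ℝ) + 1)) :=
    ⟨0, by rintro _ ⟨n, rfl⟩; exact div_nonneg (Real.log_natCast_nonneg _) (by positivity)⟩
  have h1 : h ≤ Real.log (coverNum T ![Uᶜ, Vᶜ] (m + 1)) / ((m : ℝ) + 1) := ciInf_le hbdd m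
  rw [le_div_iff₀ hm] at h1
  have hlogpos : 0 < Real.log (coverNum T ![Uᶜ, Vᶜ] (m + 1)) :=
    lt_of_lt_of_le (mul_pos hpos hm) h1
  have hcpos : 0 < coverNum T ![Uᶜ, Vᶜ] (m + 1) := by
    rcases Nat.eq_zero_or_pos (coverNum T ![Uᶜ, Vᶜ] (m + 1)) with h0 | h0
    · rw [h0] at hlogpos; simp at hlogpos
    · exact h0
  have hcF := coverNum_le T U V (m + 1) F hF
  have hFpos : (0 : ℝ) < F.card := by exact_mod_cast hcpos.trans_le hcF
  have hlogF : h * (m + 1) ≤ Real.log F.card :=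
    h1.trans (Real.log_le_log (by exact_mod_cast hcpos) (by exact_mod_cast hcF))
  have hρ : (0 : ℝ) < 1 - (1 / 2) ^ a := lt_of_lt_of_le (Real.exp_pos _) ha
  have hGne : G.Nonempty := by
    rw [Finset.nonempty_iff_ne_empty]
    rintro rfl
    simp only [Finset.card_empty, Nat.cast_zero] at hle
    rw [zero_pow (by omega)] at hle
    exact absurd hle (not_le.2 (by positivity))
  refine ⟨G, hG, hGne, ?_⟩
  have hl := Real.log_le_log (by positivity) hle
  rw [Real.log_mul hFpos.ne' (by positivity), Real.log_pow, Real.log_pow] at hl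
  have hlρ : -(h / 2) ≤ Real.log (1 - (1 / 2) ^ a) := by
    rw [Real.le_log_iff_exp_le hρ]; exact ha
  rw [div_mul_eq_mul_div, div_le_iff₀ ha0]
  push_cast at hl
  nlinarith

end tree

/-! ### The limiting functional -/

theorem ent_sh_le {Ω : Type} [Fintype Ω] (v : Ω → ℕ × ℕ → ℕ) (K : ℕ → ℕ)
    (hK : ∀ a p, v a p < K p.1) (i : ℕ) (A : Finset (ℕ × ℕ)) :
    ent v (sh i A) ≤ ∑ p ∈ A, (K p.1 : ℝ) := by
  induction A using Finset.induction_on with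
  | empty => simp [sh, ent_empty]
  | insert p A hp ih =>
    rw [Finset.sum_insert hp, Finset.insert_eq, sh_union]
    have h1 := ent_submod v (sh i {p}) (sh i A) ∅
    simp only [Finset.union_empty, ent_empty, add_zero] at h1
    have h2 : sh i {p} = {(p.1, p.2 + i)} := by simp [sh]
    have h3 := ent_single_le v (p.1, p.2 + i) (K p.1) (fun a => hK a _)
    rw [← h2] at h3
    linarith

theorem exists_functional (Ω : ℕ → Type) [∀ M, Fintype (Ω M)] (v : ∀ M, Ω M → ℕ × ℕ → ℕ)
    (K : ℕ → ℕ) (hK : ∀ M a p, v M a p < K p.1) :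
    ∃ h : Finset (ℕ × ℕ) → ℝ, (∀ A, Tendsto (fun M : ℕ =>
      (∑ i ∈ Finset.range (M + 1), ent (v M) (sh i A)) / ((M : ℝ) + 1)) (hyperfilter ℕ : Filter ℕ)
      (𝓝 (h A))) ∧ IsEnt h := by
  set avg : Finset (ℕ × ℕ) → ℕ → ℝ := fun A M =>
    (∑ i ∈ Finset.range (M + 1), ent (v M) (sh i A)) / ((M : ℝ) + 1) with havg
  have hM : ∀ M : ℕ, (0 : ℝ) < (M : ℝ) + 1 := fun M => by positivity
  have hex : ∀ A, ∃ l, Tendsto (avg A) (hyperfilter ℕ : Filter ℕ) (𝓝 l) := by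
    intro A
    have hmem : ∀ M, avg A M ∈ Set.Icc (0 : ℝ) (∑ p ∈ A, (K p.1 : ℝ)) := by
      intro M
      constructor
      · exact div_nonneg (Finset.sum_nonneg fun i _ => ent_nonneg _ _) (hM M).le
      · rw [havg]
        simp only
        rw [div_le_iff₀ (hM M)]
        refine (Finset.sum_le_card_nsmul _ _ _ fun i _ => ent_sh_le (v M) K (hK M) i A).trans ?_
        rw [Finset.card_range, nsmul_eq_mul, mul_comm]
        push_cast
        rfl
    obtain ⟨l, -, hl⟩ := (isCompact_Icc (a := (0 : ℝ)) (b := ∑ p ∈ A, (K p.1 : ℝ))).ultrafilter_le_nhds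
      ((hyperfilter ℕ).map (avg A)) (by
        rw [Filter.le_principal_iff]
        exact Filter.mem_map.2 (Filter.Eventually.of_forall hmem))
    exact ⟨l, hl⟩
  choose h hh using hex
  refine ⟨h, hh, ?_, ?_, ?_, ?_⟩
  · refine tendsto_nhds_unique (hh ∅) ?_
    have : avg ∅ = fun _ => 0 := by
      funext M
      simp [havg, sh, ent_empty]
    rw [this]
    exact tendsto_const_nhds
  · intro A B hAB
    refine le_of_tendsto_of_tendsto' (hh A) (hh B) fun M => ?_
    refine div_le_div_of_nonneg_right (Finset.sum_le_sum fun i _ => ?_) (hM M).le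
    exact ent_mono _ (Finset.image_subset_image hAB)
  · intro A B C
    refine le_of_tendsto_of_tendsto' ((hh _).add (hh _)) ((hh _).add (hh _)) fun M => ?_
    simp only [havg]
    rw [← add_div, ← add_div, ← Finset.sum_add_distrib, ← Finset.sum_add_distrib]
    refine div_le_div_of_nonneg_right (Finset.sum_le_sum fun i _ => ?_) (hM M).le
    simp only [sh_union]
    exact ent_submod _ _ _ _
  · intro A
    have hd : Tendsto (fun M => avg (sh 1 A) M - avg A M) (hyperfilter ℕ : Filter ℕ) (𝓝 0) := by
      set B := ∑ p ∈ A, (K p.1 : ℝ)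
      have hB : Tendsto (fun M : ℕ => B / ((M : ℝ) + 1)) (hyperfilter ℕ : Filter ℕ) (𝓝 0) :=
        (tendsto_const_div_atTop_nhds_zero_nat B |>.comp (tendsto_add_atTop_nat 1)
          |>.congr (by intro M; simp)).mono_left Nat.hyperfilter_le_atTop
      refine squeeze_zero_norm (fun M => ?_) hB
      simp only [havg, sh_sh]
      rw [← sub_div, ← Finset.sum_sub_distrib]
      have : ∑ i ∈ Finset.range (M + 1), (ent (v M) (sh (1 + i) A) - ent (v M) (sh i A))
          = ent (v M) (sh (M + 1) A) - ent (v M) (sh 0 A) := by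
        rw [← Finset.sum_range_sub (fun i => ent (v M) (sh i A))]
        refine Finset.sum_congr rfl fun i _ => ?_
        rw [add_comm 1 i]
      rw [this, norm_div, Real.norm_eq_abs, Real.norm_eq_abs, abs_of_pos (hM M)]
      refine div_le_div_of_nonneg_right ?_ (hM M).le
      have h1 := ent_sh_le (v M) K (hK M) (M + 1) A
      have h2 := ent_sh_le (v M) K (hK M) 0 A
      have h3 := ent_nonneg (v M) (sh (M + 1) A)
      have h4 := ent_nonneg (v M) (sh 0 A)
      rw [abs_le]
      constructor <;> linarith
    have := tendsto_nhds_unique hd ((hh (sh 1 A)).sub (hh A))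
    linarith

/-! ### Finding asymptotic pairs -/

theorem exists_fine {X : Type*} [MetricSpace X] [CompactSpace X] (ε : ℝ) (hε : 0 < ε) :
    ∃ (K : ℕ) (p : X → ℕ), (∀ x, p x < K) ∧ ∀ x y, p x = p y → dist x y ≤ ε := by
  obtain ⟨t, -, htf, hcov⟩ := Metric.totallyBounded_iff.1 (isCompact_univ (X := X)).totallyBounded
    (ε / 2) (by linarith) |>.imp (fun t ht => (⟨trivial, ht.1, ht.2⟩ : True ∧ _ ∧ _))
  have : ∀ x : X, ∃ y : htf.toFinset, dist x y < ε / 2 := by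
    intro x
    obtain ⟨y, hy, hxy⟩ := Set.mem_iUnion₂.1 (hcov (Set.mem_univ x))
    exact ⟨⟨y, by simpa using hy⟩, hxy⟩
  choose f hf using this
  refine ⟨htf.toFinset.card, fun x => htf.toFinset.equivFin (f x), fun x => Fin.is_lt _, ?_⟩
  intro x y hxy
  have he : f x = f y := htf.toFinset.equivFin.injective (Fin.ext hxy)
  have h1 := hf x
  have h2 := hf y
  rw [he] at h1
  have := dist_triangle_right x y (f y : X)
  linarith

/-- The coordinate process attached to a family of words and of points. -/
noncomputable def proc {X : Type*} (T : X → X) (pp : ℕ → X → ℕ) (w : ℕ → ℕ) (x : X) :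
    ℕ × ℕ → ℕ := fun p =>
  match p.1 with
  | 0 => if w p.2 = 2 then 1 else 0
  | 1 => w p.2
  | j + 2 => pp j (T^[p.2] x)

theorem exists_asymptotic {X : Type*} [MetricSpace X] [CompactSpace X] (T : X → X)
    (hT : Continuous T) (U V : Set X) (hU : IsClosed U) (hV : IsClosed V) (hUV : Disjoint U V)
    (hpos : 0 < coverEntropyOf T ![Uᶜ, Vᶜ]) :
    ∃ x ∈ U, ∃ y ∈ V, IsAsymptoticPair T x y := by
  obtain ⟨c, hc, hG⟩ := exists_trees T U V hUV hpos
  choose G hG hGne hGc using hG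
  have hx : ∀ M (w : G M), ∃ x, ∀ i, (w.1 i = 0 → T^[i] x ∈ U) ∧ (w.1 i = 1 → T^[i] x ∈ V) := by
    intro M w
    obtain ⟨x, -, h⟩ := (hG M).real w.1 w.2
    exact ⟨x, h⟩
  choose xx hxx using hx
  have hfine := fun j : ℕ => exists_fine (X := X) (1 / ((j : ℝ) + 1)) (by positivity)
  choose Kp pp hpp1 hpp2 using hfine
  set K : ℕ → ℕ := fun l => match l with
    | 0 => 2
    | 1 => 3
    | j + 2 => Kp j with hKdef
  set v : ∀ M, G M → ℕ × ℕ → ℕ := fun M w => proc T pp w.1 (xx M w) with hv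
  have hK : ∀ M a p, v M a p < K p.1 := by
    rintro M a ⟨l, i⟩
    match l with
    | 0 => simp only [hv, proc, hKdef]; split_ifs <;> norm_num
    | 1 => exact (hG M).lt a.1 a.2 i
    | j + 2 => exact hpp1 j _
  obtain ⟨h, hlim, hent⟩ := exists_functional (fun M => G M) v K hK
  -- initial positivity
  have base : IsEnt.Good h (1, 0) {(0, 0)} := by
    refine ⟨c, hc, fun N => ?_⟩
    refine ge_of_tendsto' ((hlim _).sub (hlim _)) fun M => ?_
    have hM : (0 : ℝ) < (M : ℝ) + 1 := by positivity
    rw [← sub_div, ← Finset.sum_sub_distrib, le_div_iff₀ hM]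
    have : Nonempty (G M) := (hGne M).to_subtype
    -- future windows of the word process
    set Wd : ℕ → Finset (ℕ × ℕ) := fun i => win {(1, 0)} i (M + 1) with hWd
    have hWmem : ∀ i j, i ≤ j → j < M + 1 → (1, j) ∈ Wd i := by
      intro i j h1 h2
      exact mem_win.2 ⟨j, h1, h2, 0, Finset.mem_singleton_self _, (Nat.zero_add j).symm⟩
    have hWagr : ∀ i (a b : G M), Agr (v M) (Wd i) a b → ∀ j, i ≤ j → a.1 j = b.1 j := by
      intro i a b hab j hij
      by_cases hj : j < M + 1
      · exact hab (1, j) (hWmem i j hij hj)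
      · rw [(hG M).far a.1 a.2 j (by omega), (hG M).far b.1 b.2 j (by omega)]
    have e0 : ent (v M) (Wd 0) = Real.log (G M).card := by
      rw [ent_of_inj, Fintype.card_coe]
      intro a b hab
      exact Subtype.ext (funext fun j => hWagr 0 a b hab j (Nat.zero_le _))
    have e1 : ent (v M) (Wd (M + 1)) = 0 := by
      simp only [hWd, win_self, ent_empty]
    have hsum : ∑ i ∈ Finset.range (M + 1), (ent (v M) (Wd i) - ent (v M) (Wd (i + 1)))
        = Real.log (G M).card := by
      rw [Finset.sum_range_sub', e0, e1, sub_zero]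
    refine (hGc M).trans (hsum ▸ Finset.sum_le_sum fun i hi => ?_)
    rw [sh_union]
    set C := sh i ({(0, 0)} ∪ win ({(1, 0)} ∪ {(0, 0)}) 1 N) with hC
    have s1 := ent_submod (v M) (sh i {(1, 0)}) (Wd (i + 1)) C
    have s2 : ent (v M) (Wd i) ≤ ent (v M) (sh i {(1, 0)} ∪ Wd (i + 1) ∪ C) := by
      apply ent_mono
      intro p hp
      simp only [hWd, mem_win, Finset.mem_singleton, Prod.mk.injEq] at hp
      obtain ⟨j, h1, h2, t, ⟨h3, rfl⟩, h4⟩ := hp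
      apply Finset.mem_union_left
      rcases Nat.eq_or_lt_of_le h1 with rfl | h1
      · apply Finset.mem_union_left
        rw [mem_sh]
        exact ⟨0, by simp [h3], h4⟩
      · apply Finset.mem_union_right
        simp only [hWd, mem_win, Finset.mem_singleton, Prod.mk.injEq]
        exact ⟨j, h1, h2, 0, ⟨h3, rfl⟩, h4⟩
    have s3 : ent (v M) (Wd (i + 1) ∪ C) ≤ ent (v M) (Wd (i + 1)) := by
      apply ent_le_of
      intro a b hab p hp
      have hfut := hWagr (i + 1) a b hab
      rcases Finset.mem_union.1 hp with hp | hp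
      · exact hab p hp
      · simp only [hC, mem_sh, mem_win, Finset.mem_union, Finset.mem_singleton,
          Prod.mk.injEq] at hp
        obtain ⟨l, t⟩ := p
        simp only at hp
        obtain ⟨s, ⟨rfl, rfl⟩ | ⟨k, h1, h2, u, h3, h4⟩, h5⟩ := hp
        · have : a.1 t = 2 ↔ b.1 t = 2 := by
            apply (hG M).det a.1 a.2 b.1 b.2
            intro j hj
            exact hfut j (by omega)
          simp only [hv, proc, this]
        · have hval : a.1 t = b.1 t := hfut t (by omega)
          rcases h3 with ⟨rfl, -⟩ | ⟨rfl, -⟩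
          · exact hval
          · simp only [hv, proc, hval]
    linarith
  -- choose the delays recursively
  have hstep : ∀ (k : ℕ) (W : {W // IsEnt.Good h (1, 0) W}),
      ∃ n, IsEnt.Good h (1, 0) (W.1 ∪ {(k + 2, n)}) :=
    fun k W => hent.good_step (1, 0) W.1 W.2 (k + 2)
  choose nf hnf using hstep
  let Ws : ℕ → {W // IsEnt.Good h (1, 0) W} := fun k =>
    Nat.rec ⟨{(0, 0)}, base⟩ (fun k W => ⟨W.1 ∪ {(k + 2, nf k W)}, hnf k W⟩) k
  set n : ℕ → ℕ := fun k => nf k (Ws k) with hn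
  have hWs : ∀ k, (Ws (k + 1)).1 = (Ws k).1 ∪ {(k + 2, n k)} := fun k => rfl
  have hW0 : ∀ k, (0, 0) ∈ (Ws k).1 := by
    intro k
    induction k with
    | zero => exact Finset.mem_singleton_self _
    | succ k ih => rw [hWs]; exact Finset.mem_union_left _ ih
  have hWj : ∀ k j, j < k → (j + 2, n j) ∈ (Ws k).1 := by
    intro k
    induction k with
    | zero => intro j hj; omega
    | succ k ih =>
      intro j hj
      rw [hWs]
      rcases Nat.lt_succ_iff_lt_or_eq.1 hj with hj | rfl
      · exact Finset.mem_union_left _ (ih j hj)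
      · exact Finset.mem_union_right _ (Finset.mem_singleton_self _)
  -- finite approximations
  have fin : ∀ k : ℕ, ∃ q : X × X, q ∈ U ×ˢ V ∧
      ∀ j < k, ∀ i, n j ≤ i → i < n j + k → dist (T^[i] q.1) (T^[i] q.2) ≤ 1 / ((j : ℝ) + 1) := by
    intro k
    obtain ⟨c', hc', hgood⟩ := (Ws k).2
    have h1 := hgood k
    set A := (Ws k).1 ∪ win ({(1, 0)} ∪ (Ws k).1) 1 k with hA
    have hlt : h A < h ({(1, 0)} ∪ A) := by linarith
    obtain ⟨M, hMlt⟩ := ((hlim A).eventually_lt (hlim _) hlt).exists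
    have hM : (0 : ℝ) < (M : ℝ) + 1 := by positivity
    rw [div_lt_div_iff_of_pos_right hM] at hMlt
    obtain ⟨s, -, hs⟩ := Finset.exists_lt_of_sum_lt hMlt
    have : ∃ a b : G M, Agr (v M) (sh s A) a b ∧ a.1 s ≠ b.1 s := by
      by_contra hcon
      push Not at hcon
      refine absurd hs (not_lt.2 (ent_le_of _ fun a b hab p hp => ?_))
      rw [sh_union, Finset.mem_union] at hp
      rcases hp with hp | hp
      · simp only [mem_sh, Finset.mem_singleton, Prod.mk.injEq] at hp
        obtain ⟨t, ⟨h2, rfl⟩, h3⟩ := hp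
        have hp' : p = (1, s) := Prod.ext h2 (by simpa using h3)
        rw [hp']
        exact hcon a b hab
      · exact hab p hp
    obtain ⟨a, b, hab, hne⟩ := this
    have hflag : a.1 s = 2 ↔ b.1 s = 2 := by
      have h2 := hab (0, s) (mem_sh.2 ⟨0, Finset.mem_union_left _ (hW0 k), by simp⟩)
      simp only [hv, proc] at h2
      by_cases h3 : a.1 s = 2 <;> by_cases h4 : b.1 s = 2 <;> simp_all
    have hname : ∀ j < k, ∀ i, n j ≤ i → i < n j + k →
        pp j (T^[i] (T^[s] (xx M a))) = pp j (T^[i] (T^[s] (xx M b))) := by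
      intro j hj i h2 h3
      have h4 : (j + 2, i) ∈ A := by
        rcases Nat.eq_or_lt_of_le h2 with rfl | h2
        · exact Finset.mem_union_left _ (hWj k j hj)
        · refine Finset.mem_union_right _ (mem_win.2 ⟨i - n j, by omega, by omega, n j,
            Finset.mem_union_right _ (hWj k j hj), ?_⟩)
          simp only
          omega
      have h5 := hab (j + 2, i + s) (mem_sh.2 ⟨i, h4, rfl⟩)
      simp only [hv, proc, Function.iterate_add_apply] at h5
      exact h5
    have la := (hG M).lt a.1 a.2 s
    have lb := (hG M).lt b.1 b.2 s
    have hcases : (a.1 s = 0 ∧ b.1 s = 1) ∨ (a.1 s = 1 ∧ b.1 s = 0) := by omega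
    rcases hcases with ⟨ea, eb⟩ | ⟨ea, eb⟩
    · refine ⟨(T^[s] (xx M a), T^[s] (xx M b)),
        ⟨(hxx M a s).1 ea, (hxx M b s).2 eb⟩, fun j hj i h2 h3 => ?_⟩
      exact hpp2 j _ _ (hname j hj i h2 h3)
    · refine ⟨(T^[s] (xx M b), T^[s] (xx M a)),
        ⟨(hxx M b s).1 eb, (hxx M a s).2 ea⟩, fun j hj i h2 h3 => ?_⟩
      exact hpp2 j _ _ (hname j hj i h2 h3).symm
  choose q hq1 hq2 using fin
  have hcomp : IsCompact (U ×ˢ V) := (hU.prod hV).isCompact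
  obtain ⟨z, hz, φ, hφ, hlimz⟩ := hcomp.tendsto_subseq hq1
  have hbound : ∀ j i, n j ≤ i → dist (T^[i] z.1) (T^[i] z.2) ≤ 1 / ((j : ℝ) + 1) := by
    intro j i hij
    have hcont : Continuous fun p : X × X => dist (T^[i] p.1) (T^[i] p.2) :=
      ((hT.iterate i).comp continuous_fst).dist ((hT.iterate i).comp continuous_snd)
    refine le_of_tendsto ((hcont.tendsto z).comp hlimz) ?_
    filter_upwards [eventually_gt_atTop (i + j)] with k hk
    have := hφ.id_le k
    simp only [id] at this
    exact hq2 (φ k) j (by omega) i hij (by omega)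
  refine ⟨z.1, hz.1, z.2, hz.2, ?_⟩
  unfold IsAsymptoticPair
  rw [Metric.tendsto_atTop]
  intro ε hε
  obtain ⟨j, hj⟩ := exists_nat_one_div_lt hε
  refine ⟨n j, fun i hi => ?_⟩
  rw [Real.dist_eq, sub_zero, abs_of_nonneg dist_nonneg]
  exact (hbound j i hi).trans_lt hj

end EPair

/-- The closure of the set `A` of asymptotic pairs contains the set
`E(X,T)` of topological entropy pairs: asymptotic pairs are dense in the set of entropy
pairs. -/
theorem entropyPairs_subset_closure_asymptoticPairs
    {X : Type*} [MetricSpace X] [CompactSpace X] (T : X ≃ₜ X) :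
    {p : X × X | IsEntropyPair (⇑T) p.1 p.2} ⊆
      closure {p : X × X | IsAsymptoticPair (⇑T) p.1 p.2} := by
  rintro ⟨x, y⟩ ⟨hne, hE⟩
  simp only at hne hE
  rw [Metric.mem_closure_iff]
  intro ε hε
  have hd : 0 < dist x y := dist_pos.2 hne
  set δ := min (ε / 2) (dist x y / 3) with hδ
  have hδ0 : 0 < δ := lt_min (by linarith) (by linarith)
  have hδ1 : δ ≤ ε / 2 := min_le_left _ _
  have hδ2 : δ ≤ dist x y / 3 := min_le_right _ _
  have hdisj : Disjoint (Metric.closedBall x δ) (Metric.closedBall y δ) :=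
    Metric.closedBall_disjoint_closedBall (by linarith)
  obtain ⟨a, ha, b, hb, hab⟩ := EPair.exists_asymptotic (⇑T) T.continuous
    (Metric.closedBall x δ) (Metric.closedBall y δ) Metric.isClosed_closedBall
    Metric.isClosed_closedBall hdisj
    (hE _ _ Metric.isClosed_closedBall Metric.isClosed_closedBall
      (Metric.closedBall_mem_nhds x hδ0) (Metric.closedBall_mem_nhds y hδ0) hdisj)
  refine ⟨(a, b), hab, ?_⟩
  rw [Metric.mem_closedBall] at ha hb
  rw [Prod.dist_eq, dist_comm (x, y).1, dist_comm (x, y).2]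
  exact max_lt (by simp only; linarith) (by simp only; linarith)
end

section
/- Let (X,T) be an invertible topological dynamical system admitting a T-invariant Borel probability measure μ of full topological support such that the measure-preserving system (X,B,T,μ) is a K-system (its Pinsker σ-algebra is trivial mod μ). Then the set of asymptotic pairs is dense in X×X. -/
open MeasureTheory Filter Topology Set
open scoped symmDiff Classical ENNReal NNReal

/-- A monotone submodular shift-invariant set function. -/
structure ShiftPoly {I : Type*} (σ : Equiv.Perm I) (f : Finset I → ℝ) : Prop where
  mono : ∀ s t : Finset I, s ⊆ t → f s ≤ f t
  sub : ∀ a b c : Finset I, f (a ∪ b ∪ c) + f c ≤ f (a ∪ c) + f (b ∪ c)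
  inv : ∀ s : Finset I, f (s.image σ) = f s

section Poly

variable {I : Type*}

/-- Conditional value. -/
noncomputable def cf (f : Finset I → ℝ) (a : Finset I) (C : Set I) : ℝ :=
  ⨅ c : {c : Finset I // (c : Set I) ⊆ C}, (f (a ∪ c.1) - f c.1)

/-- Future of a finite set from time `n` on. -/
def fut (σ : Equiv.Perm I) (a : Finset I) (n : ℤ) : Set I :=
  {i | ∃ m : ℤ, n ≤ m ∧ ∃ j ∈ a, (σ ^ m) j = i}

/-- Full orbit of a finite set. -/
def orb (σ : Equiv.Perm I) (a : Finset I) : Set I :=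
  {i | ∃ m : ℤ, ∃ j ∈ a, (σ ^ m) j = i}

/-- Finite block `a ∪ σ a ∪ ... ∪ σ^(n-1) a`. -/
noncomputable def blk (σ : Equiv.Perm I) (a : Finset I) : ℕ → Finset I
  | 0 => ∅
  | n + 1 => a ∪ (blk σ a n).image σ

variable {σ : Equiv.Perm I} {f : Finset I → ℝ}

theorem cf_bdd (hf : ShiftPoly σ f) (a : Finset I) (C : Set I) :
    BddBelow (range fun c : {c : Finset I // (c : Set I) ⊆ C} => (f (a ∪ c.1) - f c.1)) := by
  refine ⟨0, ?_⟩
  rintro _ ⟨c, rfl⟩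
  have := hf.mono c.1 (a ∪ c.1) Finset.subset_union_right
  simp only; linarith

instance (C : Set I) : Nonempty {c : Finset I // (c : Set I) ⊆ C} := ⟨⟨∅, by simp⟩⟩

theorem cf_nonneg (hf : ShiftPoly σ f) (a : Finset I) (C : Set I) : 0 ≤ cf f a C := by
  refine le_ciInf fun c => ?_
  have := hf.mono c.1 (a ∪ c.1) Finset.subset_union_right
  linarith

theorem cf_le (hf : ShiftPoly σ f) (a : Finset I) {C : Set I} (c : Finset I)
    (hc : (c : Set I) ⊆ C) : cf f a C ≤ f (a ∪ c) - f c :=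
  ciInf_le (cf_bdd hf a C) ⟨c, hc⟩

theorem fin_anti (hf : ShiftPoly σ f) (a c d : Finset I) (h : c ⊆ d) :
    f (a ∪ d) - f d ≤ f (a ∪ c) - f c := by
  have h1 := hf.sub a d c
  have e1 : a ∪ d ∪ c = a ∪ d := by
    rw [Finset.union_assoc, Finset.union_eq_left.2 h]
  rw [e1, Finset.union_eq_left.2 h] at h1
  linarith

theorem cf_approx (a : Finset I) (C : Set I) {ε : ℝ} (hε : 0 < ε) :
    ∃ c : Finset I, (c : Set I) ⊆ C ∧ f (a ∪ c) - f c < cf f a C + ε := by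
  obtain ⟨c, hc⟩ := exists_lt_of_ciInf_lt (show cf f a C < cf f a C + ε by linarith)
  exact ⟨c.1, c.2, hc⟩

theorem cf_anti (hf : ShiftPoly σ f) (a : Finset I) {C D : Set I} (h : C ⊆ D) :
    cf f a D ≤ cf f a C :=
  le_ciInf fun c => cf_le hf a c.1 (c.2.trans h)

theorem cf_chain (hf : ShiftPoly σ f) (a b : Finset I) (C : Set I) :
    cf f (a ∪ b) C = cf f a C + cf f b (C ∪ a) := by
  apply le_antisymm
  · refine le_of_forall_pos_le_add fun ε hε => ?_
    obtain ⟨c, hc, h1⟩ := cf_approx (f := f) a C (half_pos hε)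
    obtain ⟨d, hd, h2⟩ := cf_approx (f := f) b (C ∪ a) (half_pos hε)
    -- enlarge
    set e : Finset I := c ∪ d.filter (· ∈ C) with he
    have heC : (e : Set I) ⊆ C := by
      intro x hx
      simp only [he, Finset.coe_union, Finset.coe_filter, mem_union, mem_ofPred_eq,
        Finset.mem_coe] at hx
      rcases hx with hx | hx
      · exact hc hx
      · exact hx.2
    have hde : d ⊆ a ∪ e := by
      intro x hx
      have := hd hx
      simp only [he, Finset.mem_union, Finset.mem_filter]
      rcases this with h | h
      · exact Or.inr (Or.inr ⟨hx, h⟩)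
      · exact Or.inl h
    have k1 := fin_anti hf a c e Finset.subset_union_left
    have k2 := fin_anti hf b d (a ∪ e) hde
    have k3 := cf_le hf (a ∪ b) e heC
    have e1 : a ∪ b ∪ e = b ∪ (a ∪ e) := by ext; simp; tauto
    rw [e1] at k3
    linarith
  · refine le_ciInf fun c => ?_
    have k1 := cf_le hf a c.1 c.2
    have k2 := cf_le hf b (C := C ∪ a) (a ∪ c.1) (by
      rw [Finset.coe_union, union_comm]; exact union_subset_union_left _ c.2)
    have e1 : a ∪ b ∪ c.1 = b ∪ (a ∪ c.1) := by ext; simp; tauto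
    rw [e1]; linarith

theorem cf_mono (hf : ShiftPoly σ f) {a b : Finset I} (h : a ⊆ b) (C : Set I) :
    cf f a C ≤ cf f b C := by
  rw [← Finset.union_eq_right.2 h, cf_chain hf]
  linarith [cf_nonneg hf b (C ∪ a)]

theorem cf_empty (C : Set I) : cf f ∅ C = 0 := by
  unfold cf; simp

theorem cf_inv_le (hf : ShiftPoly σ f) (a : Finset I) (C : Set I) :
    cf f (a.image σ) (σ '' C) ≤ cf f a C := by
  refine le_ciInf fun c => ?_
  refine (cf_le hf _ (c.1.image σ) (by rw [Finset.coe_image]; exact image_mono c.2)).trans ?_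
  rw [← Finset.image_union, hf.inv, hf.inv]

theorem cf_inv (hf : ShiftPoly σ f) (a : Finset I) (C : Set I) :
    cf f (a.image σ) (σ '' C) = cf f a C := by
  refine le_antisymm (cf_inv_le hf a C) (le_ciInf fun c => ?_)
  have hcc : (c.1.image σ.symm).image σ = c.1 := by
    rw [Finset.image_image]; simp
  have := cf_le hf a (C := C) (c.1.image σ.symm) (by
    rw [Finset.coe_image]
    rintro _ ⟨x, hx, rfl⟩
    obtain ⟨y, hy, rfl⟩ := c.2 hx
    simpa using hy)
  rw [← hf.inv, ← hf.inv (c.1.image σ.symm), Finset.image_union, hcc] at this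
  exact this

theorem cf_tendsto (hf : ShiftPoly σ f) (a : Finset I) (C : ℕ → Set I) (hC : Monotone C) :
    Tendsto (fun n => cf f a (C n)) atTop (𝓝 (cf f a (⋃ n, C n))) := by
  have hanti : Antitone fun n => cf f a (C n) := fun m n h => cf_anti hf a (hC h)
  rw [Metric.tendsto_atTop]
  intro ε hε
  obtain ⟨c, hc, h1⟩ := cf_approx (f := f) a (⋃ n, C n) hε
  have : ∃ N, (c : Set I) ⊆ C N := by
    clear h1
    induction c using Finset.induction_on with
    | empty => exact ⟨0, by simp⟩
    | insert x c _ ih =>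
      rw [Finset.coe_insert, insert_subset_iff] at hc
      obtain ⟨N, hN⟩ := ih hc.2
      obtain ⟨M, hM⟩ := mem_iUnion.1 hc.1
      refine ⟨max N M, ?_⟩
      rw [Finset.coe_insert, insert_subset_iff]
      exact ⟨hC (le_max_right N M) hM, hN.trans (hC (le_max_left N M))⟩
  obtain ⟨N, hN⟩ := this
  refine ⟨N, fun n hn => ?_⟩
  have h2 := cf_le hf a c (hN.trans (hC hn))
  have h3 := cf_anti hf a (subset_iUnion C n)
  rw [Real.dist_eq, abs_lt]
  constructor <;> linarith


theorem image_fut (a : Finset I) (n : ℤ) : σ '' fut σ a n = fut σ a (n + 1) := by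
  ext i
  constructor
  · rintro ⟨_, ⟨m, hm, j, hj, rfl⟩, rfl⟩
    refine ⟨m + 1, by lia, j, hj, ?_⟩
    rw [add_comm, zpow_add, zpow_one]; rfl
  · rintro ⟨m, hm, j, hj, rfl⟩
    refine ⟨(σ ^ (m - 1)) j, ⟨m - 1, by lia, j, hj, rfl⟩, ?_⟩
    rw [← Equiv.Perm.mul_apply, ← zpow_one_add]
    congr 2; lia

theorem fut_anti (a : Finset I) {m n : ℤ} (h : m ≤ n) : fut σ a n ⊆ fut σ a m := by
  rintro _ ⟨k, hk, j, hj, rfl⟩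
  exact ⟨k, h.trans hk, j, hj, rfl⟩

theorem fut_mono {a b : Finset I} (h : a ⊆ b) (n : ℤ) : fut σ a n ⊆ fut σ b n := by
  rintro _ ⟨k, hk, j, hj, rfl⟩
  exact ⟨k, hk, j, h hj, rfl⟩

theorem fut_union (a b : Finset I) (n : ℤ) : fut σ (a ∪ b) n = fut σ a n ∪ fut σ b n := by
  ext i
  simp only [fut, Finset.mem_union, mem_union, mem_ofPred_eq]
  constructor
  · rintro ⟨m, hm, j, hj | hj, rfl⟩
    · exact Or.inl ⟨m, hm, j, hj, rfl⟩
    · exact Or.inr ⟨m, hm, j, hj, rfl⟩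
  · rintro (⟨m, hm, j, hj, rfl⟩ | ⟨m, hm, j, hj, rfl⟩)
    · exact ⟨m, hm, j, Or.inl hj, rfl⟩
    · exact ⟨m, hm, j, Or.inr hj, rfl⟩

theorem mem_blk (a : Finset I) (n : ℕ) (i : I) :
    i ∈ blk σ a n ↔ ∃ m : ℤ, 0 ≤ m ∧ m < n ∧ ∃ j ∈ a, (σ ^ m) j = i := by
  induction n generalizing i with
  | zero =>
    simp only [blk, Finset.notMem_empty, false_iff]
    rintro ⟨m, h1, h2, -⟩
    simp at h2; lia
  | succ n ih =>
    simp only [blk, Finset.mem_union, Finset.mem_image, ih]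
    constructor
    · rintro (h | ⟨_, ⟨m, h0, h1, j, hj, rfl⟩, rfl⟩)
      · exact ⟨0, le_rfl, by push_cast; lia, i, h, by simp⟩
      · refine ⟨1 + m, by lia, by push_cast; lia, j, hj, ?_⟩
        rw [zpow_add, zpow_one]; rfl
    · rintro ⟨m, h0, h1, j, hj, rfl⟩
      rcases eq_or_lt_of_le h0 with rfl | h0
      · left; simpa using hj
      · right
        refine ⟨(σ ^ (m - 1)) j, ⟨m - 1, by lia, by push_cast at h1; lia, j, hj, rfl⟩, ?_⟩
        rw [← Equiv.Perm.mul_apply, ← zpow_one_add]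
        congr 2; lia

theorem blk_union (a b : Finset I) (n : ℕ) : blk σ (a ∪ b) n = blk σ a n ∪ blk σ b n := by
  induction n with
  | zero => simp [blk]
  | succ n ih => simp only [blk, ih, Finset.image_union, Finset.union_assoc,
      Finset.union_left_comm b]

theorem mem_image_blk (a : Finset I) (n : ℕ) (i : I) :
    i ∈ (blk σ a n).image σ ↔ ∃ m : ℤ, 1 ≤ m ∧ m < n + 1 ∧ ∃ j ∈ a, (σ ^ m) j = i := by
  simp only [Finset.mem_image, mem_blk]
  constructor
  · rintro ⟨_, ⟨m, h0, h1, j, hj, rfl⟩, rfl⟩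
    refine ⟨1 + m, by lia, by lia, j, hj, ?_⟩
    rw [zpow_add, zpow_one]; rfl
  · rintro ⟨m, h0, h1, j, hj, rfl⟩
    refine ⟨(σ ^ (m - 1)) j, ⟨m - 1, by lia, by lia, j, hj, rfl⟩, ?_⟩
    rw [← Equiv.Perm.mul_apply, ← zpow_one_add]
    congr 2; lia

theorem fut_union_blk (a : Finset I) (n : ℕ) :
    fut σ a (n + 1) ∪ ((blk σ a n).image σ : Finset I) = fut σ a 1 := by
  ext i
  simp only [mem_union, Finset.mem_coe, mem_image_blk]
  constructor
  · rintro (⟨m, h, hj⟩ | ⟨m, h0, h1, hj⟩)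
    · exact ⟨m, by lia, hj⟩
    · exact ⟨m, h0, hj⟩
  · rintro ⟨m, h, hj⟩
    by_cases hm : m < n + 1
    · exact Or.inr ⟨m, h, hm, hj⟩
    · exact Or.inl ⟨m, by lia, hj⟩

theorem w_sum (hf : ShiftPoly σ f) (a b : Finset I) (n : ℕ) (s : ℤ) :
    cf f (blk σ a n) (fut σ a n ∪ fut σ b s) =
      ∑ j ∈ Finset.range n, cf f a (fut σ a 1 ∪ fut σ b (s - j)) := by
  induction n generalizing s with
  | zero => simp [blk, cf_empty]
  | succ n ih =>
    rw [blk, Finset.union_comm, cf_chain hf, Finset.sum_range_succ']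
    congr 1
    · have : fut σ a ((n + 1 : ℕ) : ℤ) ∪ fut σ b s = σ '' (fut σ a n ∪ fut σ b (s - 1)) := by
        rw [image_union, image_fut, image_fut]; simp
      rw [this, cf_inv hf, ih]
      refine Finset.sum_congr rfl fun j _ => ?_
      congr 3; push_cast; ring
    · congr 1
      rw [union_right_comm]
      rw [Nat.cast_add, Nat.cast_one, fut_union_blk]; simp

theorem blk_sum (hf : ShiftPoly σ f) (a : Finset I) (n : ℕ) :
    cf f (blk σ a n) ∅ =
      ∑ j ∈ Finset.range n, cf f a ((blk σ a j).image σ : Finset I) := by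
  induction n with
  | zero => simp [blk, cf_empty]
  | succ n ih =>
    rw [blk, Finset.union_comm, cf_chain hf, Finset.sum_range_succ, ← ih]
    congr 1
    · conv_rhs => rw [← cf_inv hf]
      simp
    · simp

theorem fut_empty (s : ℤ) : fut σ ∅ s = ∅ := by
  ext i; simp [fut]

/-- Rate. -/
noncomputable def rate (σ : Equiv.Perm I) (f : Finset I → ℝ) (a : Finset I) : ℝ :=
  cf f a (fut σ a 1)

theorem blk_rate (hf : ShiftPoly σ f) (a : Finset I) :
    Tendsto (fun n : ℕ => (n : ℝ)⁻¹ * cf f (blk σ a n) ∅) atTop (𝓝 (rate σ f a)) := by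
  simp only [blk_sum hf]
  apply Filter.Tendsto.cesaro
  have := cf_tendsto hf a (fun j => (((blk σ a j).image σ : Finset I) : Set I)) (by
    intro m n h i
    simp only [Finset.mem_coe, mem_image_blk]
    rintro ⟨k, h0, h1, hj⟩
    exact ⟨k, h0, by lia, hj⟩)
  have e : fut σ a 1 = ⋃ j, (((blk σ a j).image σ : Finset I) : Set I) := ?_
  · rw [rate, e]; exact this
  ext i
  simp only [mem_iUnion, Finset.mem_coe, mem_image_blk]
  constructor
  · rintro ⟨m, h, hj⟩
    exact ⟨m.toNat, m, h, by lia, hj⟩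
  · rintro ⟨_, m, h, _, hj⟩
    exact ⟨m, h, hj⟩

theorem iUnion_fut (b : Finset I) : ⋃ j : ℕ, fut σ b (0 - (j : ℤ)) = orb σ b := by
  ext i
  simp only [mem_iUnion]
  constructor
  · rintro ⟨_, m, _, hj⟩
    exact ⟨m, hj⟩
  · rintro ⟨m, hj⟩
    exact ⟨m.natAbs, m, by lia, hj⟩

theorem fut_subset_orb (b : Finset I) (n : ℤ) : fut σ b n ⊆ orb σ b := by
  rintro _ ⟨k, hk, j, hj, rfl⟩
  exact ⟨k, j, hj, rfl⟩

theorem pinsker_aux (hf : ShiftPoly σ f) (a b : Finset I) :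
    rate σ f (a ∪ b) = rate σ f b + cf f a (fut σ a 1 ∪ orb σ b) ∧
    Tendsto (fun j : ℕ => cf f b (fut σ b 1 ∪ fut σ a j)) atTop (𝓝 (rate σ f b)) := by
  set E := cf f a (fut σ a 1 ∪ orb σ b) with hE
  -- lower bound
  have hlow : rate σ f b + E ≤ rate σ f (a ∪ b) := by
    refine le_of_tendsto_of_tendsto ((blk_rate hf b).add_const E) (blk_rate hf (a ∪ b)) ?_
    filter_upwards [eventually_gt_atTop 0] with n hn
    have hn' : (0 : ℝ) < n := by exact_mod_cast hn
    have h1 : cf f (blk σ (a ∪ b) n) ∅ = cf f (blk σ b n) ∅ + cf f (blk σ a n) (blk σ b n) := by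
      rw [blk_union, Finset.union_comm, cf_chain hf]; simp
    have h2 : n * E ≤ cf f (blk σ a n) (blk σ b n) := by
      calc n * E = ∑ j ∈ Finset.range n, E := by simp
        _ ≤ ∑ j ∈ Finset.range n, cf f a (fut σ a 1 ∪ fut σ b (0 - j)) := by
            refine Finset.sum_le_sum fun j _ => cf_anti hf a ?_
            exact union_subset_union_right _ (fut_subset_orb _ _)
        _ = cf f (blk σ a n) (fut σ a n ∪ fut σ b 0) := (w_sum hf a b n 0).symm
        _ ≤ _ := by
            refine cf_anti hf _ ?_
            intro i hi
            obtain ⟨m, h0, _, hj⟩ := (mem_blk _ _ _).1 hi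
            exact Or.inr ⟨m, h0, hj⟩
    rw [h1, mul_add]
    have : E = (n : ℝ)⁻¹ * (n * E) := by field_simp
    rw [this]
    gcongr
  -- upper
  have hmon : Monotone fun j : ℕ => cf f b (fut σ b 1 ∪ fut σ a j) := by
    intro i j h
    exact cf_anti hf b (union_subset_union_right _ (fut_anti a (by exact_mod_cast h)))
  have hle : ∀ j : ℕ, cf f b (fut σ b 1 ∪ fut σ a j) ≤ rate σ f b := fun j =>
    cf_anti hf b subset_union_left
  obtain ⟨L, hL⟩ : ∃ L, Tendsto (fun j : ℕ => cf f b (fut σ b 1 ∪ fut σ a j)) atTop (𝓝 L) :=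
    ⟨_, tendsto_atTop_ciSup hmon ⟨_, by rintro _ ⟨j, rfl⟩; exact hle j⟩⟩
  have hLle : L ≤ rate σ f b := le_of_tendsto' hL hle
  have hup : rate σ f (a ∪ b) = L + E := by
    have t1 : Tendsto (fun n : ℕ => (n : ℝ)⁻¹ * ∑ j ∈ Finset.range n,
        cf f b (fut σ b 1 ∪ fut σ a (j + 1 : ℕ))) atTop (𝓝 L) :=
      (hL.comp (tendsto_add_atTop_nat 1)).cesaro
    have t2 : Tendsto (fun n : ℕ => (n : ℝ)⁻¹ * ∑ j ∈ Finset.range n,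
        cf f a (fut σ a 1 ∪ fut σ b (0 - j))) atTop (𝓝 E) := by
      apply Filter.Tendsto.cesaro
      have := cf_tendsto hf a (fun j : ℕ => fut σ a 1 ∪ fut σ b (0 - j)) (by
        intro i j h
        exact union_subset_union_right _ (fut_anti _ (by lia)))
      rwa [← union_iUnion, iUnion_fut] at this
    refine tendsto_nhds_unique_of_eventuallyEq tendsto_const_nhds (t1.add t2) ?_
    filter_upwards [eventually_gt_atTop 0] with n hn
    have hn' : (0 : ℝ) < n := by exact_mod_cast hn
    have h0 := w_sum hf (a ∪ b) ∅ n 0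
    simp only [fut_empty, union_empty, Finset.sum_const, Finset.card_range, nsmul_eq_mul] at h0
    rw [blk_union, Finset.union_comm, cf_chain hf, fut_union, union_comm (fut σ a n),
      w_sum hf b a n n] at h0
    have e1 : fut σ b n ∪ fut σ a n ∪ (blk σ b n : Set I) = fut σ a n ∪ fut σ b 0 := by
      ext i
      simp only [mem_union, Finset.mem_coe, mem_blk]
      constructor
      · rintro ((⟨m, h, hj⟩ | h) | ⟨m, h, _, hj⟩)
        · exact Or.inr ⟨m, by lia, hj⟩
        · exact Or.inl h
        · exact Or.inr ⟨m, h, hj⟩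
      · rintro (h | ⟨m, h, hj⟩)
        · exact Or.inl (Or.inr h)
        · by_cases hm : m < n
          · exact Or.inr ⟨m, h, hm, hj⟩
          · exact Or.inl (Or.inl ⟨m, by lia, hj⟩)
    rw [e1, w_sum hf a b n 0, ← Finset.sum_range_reflect] at h0
    have e2 : ∑ j ∈ Finset.range n, cf f b (fut σ b 1 ∪ fut σ a ((n : ℤ) - (n - 1 - j : ℕ)))
        = ∑ j ∈ Finset.range n, cf f b (fut σ b 1 ∪ fut σ a (j + 1 : ℕ)) := by
      refine Finset.sum_congr rfl fun j hj => ?_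
      have := Finset.mem_range.1 hj
      congr 3; lia
    rw [e2] at h0
    rw [← mul_add, h0, fut_union, ← fut_union]
    unfold rate
    field_simp
  have : L = rate σ f b := by linarith
  subst this
  exact ⟨hup, hL⟩


theorem cf_diff (hf : ShiftPoly σ f) {a b : Finset I} (h : a ⊆ b) {C D : Set I} (hCD : C ⊆ D) :
    cf f a C - cf f a D ≤ cf f b C - cf f b D := by
  rw [← Finset.union_eq_right.2 h, cf_chain hf, cf_chain hf]
  linarith [cf_anti hf b (union_subset_union_left (a : Set I) hCD)]

/-- The tail from time `N` of the family `A` delayed by `n`. -/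
def tl (σ : Equiv.Perm I) (A : ℕ → I) (n : ℕ → ℕ) (N : ℤ) : Set I :=
  {i | ∃ k : ℕ, ∃ m : ℤ, n k + 1 + N ≤ m ∧ (σ ^ m) (A k) = i}

theorem exists_delay (hf : ShiftPoly σ f) (A : ℕ → I) :
    ∃ (n : ℕ → ℕ) (Q : ℕ → Finset I), Q 0 = ∅ ∧
      (∀ k, Q (k + 1) = {(σ ^ (n k : ℤ)) (A k)} ∪ Q k) ∧
      ∀ k, rate σ f (Q k) ≤ cf f (Q k) (fut σ (Q (k + 1)) 1) + (1 / 2) ^ k := by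
  have key : ∀ (k : ℕ) (Q : Finset I), ∃ n : ℕ,
      rate σ f Q ≤ cf f Q (fut σ ({(σ ^ (n : ℤ)) (A k)} ∪ Q) 1) + (1 / 2) ^ k := by
    intro k Q
    have h := (pinsker_aux hf {A k} Q).2
    have h2 := h.eventually (lt_mem_nhds (show rate σ f Q - (1 / 2) ^ k < rate σ f Q by
      have : (0 : ℝ) < (1 / 2) ^ k := by positivity
      linarith))
    obtain ⟨n, hn⟩ := h2.exists
    refine ⟨n, ?_⟩
    have : cf f Q (fut σ Q 1 ∪ fut σ {A k} n) ≤
        cf f Q (fut σ ({(σ ^ (n : ℤ)) (A k)} ∪ Q) 1) := by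
      refine cf_anti hf _ ?_
      rw [fut_union]
      refine union_subset ?_ subset_union_left
      refine subset_trans ?_ subset_union_right
      rintro _ ⟨m, hm, j, hj, rfl⟩
      rw [Finset.mem_singleton] at hj
      subst hj
      refine ⟨m + n, by lia, A k, by simp, ?_⟩
      rw [zpow_add]; rfl
    linarith
  choose g hg using key
  let Q : ℕ → Finset I := fun k => Nat.rec ∅ (fun k Q => {(σ ^ (g k Q : ℤ)) (A k)} ∪ Q) k
  exact ⟨fun k => g k (Q k), Q, rfl, fun k => rfl, fun k => hg k (Q k)⟩

theorem absorb (hf : ShiftPoly σ f) (a : Finset I) (P D : Set I)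
    (h : ∀ i ∈ D, cf f {i} P = 0) : cf f a P ≤ cf f a (P ∪ D) := by
  have h0 : ∀ s : Finset I, (s : Set I) ⊆ D → cf f s P ≤ 0 := by
    intro s
    induction s using Finset.induction_on with
    | empty => intro _; exact (cf_empty P).le
    | insert i s _ ih =>
      intro hs
      rw [Finset.coe_insert, insert_subset_iff] at hs
      rw [Finset.insert_eq, cf_chain hf, h i hs.1]
      linarith [ih hs.2, cf_anti hf s (subset_union_left : P ⊆ P ∪ (({i} : Finset I) : Set I))]
  refine le_ciInf fun c => ?_
  set d := c.1.filter (· ∈ D) with hd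
  have h1 := cf_mono hf (Finset.subset_union_right : a ⊆ d ∪ a) P
  rw [cf_chain hf] at h1
  have h2 := h0 d (by intro x hx; simp [hd] at hx; exact hx.2)
  have h3 := cf_le hf a (C := P ∪ d) c.1 (by
    intro x hx
    rcases c.2 hx with h | h
    · exact Or.inl h
    · right; simp only [hd, Finset.coe_filter, mem_ofPred_eq]; exact ⟨hx, h⟩)
  linarith

theorem image_tl (A : ℕ → I) (n : ℕ → ℕ) (N : ℤ) : σ '' tl σ A n N = tl σ A n (N + 1) := by
  ext i
  constructor
  · rintro ⟨_, ⟨k, m, hm, rfl⟩, rfl⟩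
    refine ⟨k, 1 + m, by lia, ?_⟩
    rw [zpow_add, zpow_one]; rfl
  · rintro ⟨k, m, hm, rfl⟩
    refine ⟨(σ ^ (m - 1)) (A k), ⟨k, m - 1, by lia, rfl⟩, ?_⟩
    rw [← Equiv.Perm.mul_apply, ← zpow_one_add]
    congr 2; lia

theorem tl_anti (A : ℕ → I) (n : ℕ → ℕ) {M N : ℤ} (h : M ≤ N) : tl σ A n N ⊆ tl σ A n M := by
  rintro _ ⟨k, m, hm, rfl⟩
  exact ⟨k, m, by lia, rfl⟩

theorem cf_tl (hf : ShiftPoly σ f) (A : ℕ → I) (n : ℕ → ℕ) (b : I) (m N : ℤ) :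
    cf f {(σ ^ m) b} (tl σ A n (N + m)) = cf f {b} (tl σ A n N) := by
  have step : ∀ c N, cf f {σ c} (tl σ A n (N + 1)) = cf f {c} (tl σ A n N) := by
    intro c N
    rw [← image_tl, ← cf_inv hf {c}, Finset.image_singleton]
  induction m using Int.induction_on with
  | zero => simp
  | succ k ih =>
    rw [← ih, ← step ((σ ^ (k : ℤ)) b), add_comm (k : ℤ) 1, zpow_add, zpow_one, add_comm 1 (k : ℤ), add_assoc]; rfl
  | pred k ih =>
    rw [← ih, ← step ((σ ^ (-(k : ℤ) - 1)) b), ← Equiv.Perm.mul_apply, ← zpow_one_add]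
    have e1 : 1 + (-(k : ℤ) - 1) = -k := by ring
    have e2 : N + (-(k : ℤ) - 1) + 1 = N + -k := by ring
    rw [e1, e2]

/-- Existence of delays such that any index lying in the whole tail has rate zero. -/
theorem tail_rate_zero (hf : ShiftPoly σ f) (A : ℕ → I) :
    ∃ n : ℕ → ℕ, ∀ b : I, (∀ N : ℕ, cf f {b} (tl σ A n N) = 0) → rate σ f {b} = 0 := by
  obtain ⟨n, Q, hQ0, hQs, hQ⟩ := exists_delay hf A
  refine ⟨n, fun b hb => ?_⟩
  have hQmono : Monotone Q := monotone_nat_of_le_succ fun k => by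
    rw [hQs]; exact Finset.subset_union_right
  have hP : ⋃ k, fut σ (Q k) 1 = tl σ A n 0 := by
    have hmem : ∀ k i, i ∈ Q k ↔ ∃ j < k, (σ ^ (n j : ℤ)) (A j) = i := by
      intro k
      induction k with
      | zero => simp [hQ0]
      | succ k ih =>
        intro i
        rw [hQs, Finset.mem_union, Finset.mem_singleton, ih]
        constructor
        · rintro (rfl | ⟨j, hj, rfl⟩)
          · exact ⟨k, by lia, rfl⟩
          · exact ⟨j, by lia, rfl⟩
        · rintro ⟨j, hj, rfl⟩
          rcases Nat.lt_succ_iff_lt_or_eq.1 hj with h | rfl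
          · exact Or.inr ⟨j, h, rfl⟩
          · exact Or.inl rfl
    ext i
    simp only [mem_iUnion]
    constructor
    · rintro ⟨k, m, hm, i, hi, rfl⟩
      obtain ⟨j, hj, rfl⟩ := (hmem _ _).1 hi
      refine ⟨j, m + n j, by lia, ?_⟩
      rw [zpow_add]; rfl
    · rintro ⟨k, m, hm, rfl⟩
      refine ⟨k + 1, m - n k, by lia, (σ ^ (n k : ℤ)) (A k), (hmem _ _).2 ⟨k, by lia, rfl⟩, ?_⟩
      rw [← Equiv.Perm.mul_apply, ← zpow_add]
      congr 2; ring
  have hbm : ∀ m : ℤ, cf f {(σ ^ m) b} (tl σ A n 0) = 0 := by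
    intro m
    rcases le_total m 0 with h | h
    · have h1 := cf_tl hf A n b m (-m)
      rw [neg_add_cancel] at h1
      rw [h1]
      have h2 := hb m.natAbs
      have h3 : ((m.natAbs : ℕ) : ℤ) = -m := by lia
      rwa [h3] at h2
    · have h1 := cf_tl hf A n b m 0
      have h2 := hb 0
      rw [Nat.cast_zero] at h2
      refine le_antisymm ?_ (cf_nonneg hf _ _)
      rw [← h2, ← h1]
      exact cf_anti hf _ (tl_anti A n (by lia))
  have hdiff : ∀ j k, j ≤ k →
      rate σ f (Q j) - cf f (Q j) (fut σ (Q k) 1) ≤ 2 * (1 / 2) ^ j - 2 * (1 / 2) ^ k := by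
    intro j k hjk
    induction k, hjk using Nat.le_induction with
    | base => simp [rate]
    | succ k hk ih =>
      have h1 := cf_diff hf (hQmono hk)
        (fut_mono (σ := σ) (hQmono (Nat.le_succ k)) 1)
      have h2 := hQ k
      unfold rate at h2 ih ⊢
      simp only [Nat.succ_eq_add_one] at h1
      rw [pow_succ]
      linarith
  have hlim : ∀ j, rate σ f (Q j) ≤ cf f (Q j) (tl σ A n 0) + 2 * (1 / 2) ^ j := by
    intro j
    have ht := cf_tendsto hf (Q j) (fun k => fut σ (Q k) 1) (fun k l h => fut_mono (hQmono h) 1)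
    rw [hP] at ht
    refine ge_of_tendsto (ht.add_const (2 * (1 / 2) ^ j)) ?_
    filter_upwards [eventually_ge_atTop j] with k hk
    have := hdiff j k hk
    have : (0 : ℝ) < (1 / 2) ^ k := by positivity
    linarith
  have hmain : ∀ j, rate σ f {b} ≤ cf f {b} (orb σ (Q j)) + 2 * (1 / 2) ^ j := by
    intro j
    have h1 := (pinsker_aux hf (Q j) {b}).1
    have h2 := (pinsker_aux hf {b} (Q j)).1
    rw [Finset.union_comm, h1] at h2
    have h3 : cf f (Q j) (tl σ A n 0) ≤ cf f (Q j) (fut σ (Q j) 1 ∪ orb σ {b}) := by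
      refine (absorb hf (Q j) (tl σ A n 0) (orb σ {b}) ?_).trans (cf_anti hf _ ?_)
      · rintro _ ⟨m, j, hj, rfl⟩
        rw [Finset.mem_singleton] at hj
        subst hj
        exact hbm m
      · refine union_subset_union_left _ ?_
        rw [← hP]
        exact subset_iUnion (fun k => fut σ (Q k) 1) j
    have h4 := cf_anti hf {b} (subset_union_right : orb σ (Q j) ⊆ fut σ {b} 1 ∪ orb σ (Q j))
    linarith [hlim j]
  have ht := cf_tendsto hf {b} (fun j => orb σ (Q j)) (by
    rintro i j h _ ⟨m, x, hx, rfl⟩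
    exact ⟨m, x, hQmono h hx, rfl⟩)
  have hz : cf f {b} (⋃ j, orb σ (Q j)) = 0 := by
    refine le_antisymm ?_ (cf_nonneg hf _ _)
    have := hbm 0
    rw [zpow_zero, Equiv.Perm.one_apply] at this
    rw [← this]
    refine cf_anti hf _ ?_
    rw [← hP]
    exact iUnion_mono fun k => fut_subset_orb _ _
  rw [hz] at ht
  have hpow : Tendsto (fun j : ℕ => 2 * (1 / 2 : ℝ) ^ j) atTop (𝓝 (2 * 0)) :=
    (tendsto_pow_atTop_nhds_zero_of_lt_one (by norm_num) (by norm_num)).const_mul 2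
  refine le_antisymm ?_ (cf_nonneg hf _ _)
  have := ge_of_tendsto' (ht.add hpow) hmain
  simpa using this

end Poly


theorem shannon_aux {α β γ : Type*} [Fintype α] [Fintype β] [Fintype γ]
    (w : α → β → γ → ℝ) (hw : ∀ a b c, 0 ≤ w a b c)  :
    0 ≤ ∑ a, ∑ b, ∑ c, w a b c * (Real.log (w a b c) + Real.log (∑ a', ∑ b', w a' b' c)
      - Real.log (∑ b', w a b' c) - Real.log (∑ a', w a' b c)) := by
  set wc : γ → ℝ := fun c => ∑ a', ∑ b', w a' b' c with hwc
  set wac : α → γ → ℝ := fun a c => ∑ b', w a b' c with hwac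
  set wbc : β → γ → ℝ := fun b c => ∑ a', w a' b c with hwbc
  have hac0 : ∀ a c, 0 ≤ wac a c := fun a c => Finset.sum_nonneg fun b _ => hw a b c
  have hbc0 : ∀ b c, 0 ≤ wbc b c := fun b c => Finset.sum_nonneg fun a _ => hw a b c
  have hc0 : ∀ c, 0 ≤ wc c := fun c => Finset.sum_nonneg fun a _ => hac0 a c
  have term : ∀ a b c, w a b c - wac a c * wbc b c / wc c ≤
      w a b c * (Real.log (w a b c) + Real.log (wc c) - Real.log (wac a c)
        - Real.log (wbc b c)) := by
    intro a b c
    rcases (hw a b c).eq_or_lt with h | h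
    · rw [← h]
      have := div_nonneg (mul_nonneg (hac0 a c) (hbc0 b c)) (hc0 c)
      simp; linarith
    · have h1 : 0 < wac a c := h.trans_le
        (Finset.single_le_sum (f := fun b' => w a b' c) (fun b _ => hw a b c) (Finset.mem_univ b))
      have h2 : 0 < wbc b c := h.trans_le
        (Finset.single_le_sum (f := fun a' => w a' b c) (fun a _ => hw a b c) (Finset.mem_univ a))
      have h3 : 0 < wc c := h1.trans_le
        (Finset.single_le_sum (f := fun a' => wac a' c) (fun a _ => hac0 a c) (Finset.mem_univ a))
      have h4 := Real.one_sub_inv_le_log_of_pos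
        (show 0 < w a b c * wc c / (wac a c * wbc b c) by positivity)
      rw [Real.log_div (by positivity) (by positivity), Real.log_mul (by positivity) (by positivity),
        Real.log_mul (by positivity) (by positivity)] at h4
      have h5 := mul_le_mul_of_nonneg_left h4 h.le
      have e : w a b c * (1 - (w a b c * wc c / (wac a c * wbc b c))⁻¹) =
          w a b c - wac a c * wbc b c / wc c := by field_simp
      rw [e] at h5
      linarith
  refine le_trans ?_ (Finset.sum_le_sum fun a _ => Finset.sum_le_sum fun b _ =>
    Finset.sum_le_sum fun c _ => term a b c)
  have e1 : ∑ a, ∑ b, ∑ c, w a b c = ∑ c, wc c := by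
    calc _ = ∑ a, ∑ c, ∑ b, w a b c := by
          refine Finset.sum_congr rfl fun a _ => Finset.sum_comm
      _ = _ := Finset.sum_comm
  have e2 : ∑ a, ∑ b, ∑ c, wac a c * wbc b c / wc c = ∑ c, wc c := by
    calc _ = ∑ a, ∑ c, ∑ b, wac a c * wbc b c / wc c := by
          refine Finset.sum_congr rfl fun a _ => Finset.sum_comm
      _ = ∑ c, ∑ a, ∑ b, wac a c * wbc b c / wc c := Finset.sum_comm
      _ = ∑ c, wc c * wc c / wc c := by
          refine Finset.sum_congr rfl fun c _ => ?_
          simp only [← Finset.sum_div]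
          congr 1
          rw [← Finset.sum_mul_sum]
          congr 1
          exact Finset.sum_comm
      _ = _ := by
          refine Finset.sum_congr rfl fun c _ => ?_
          exact mul_self_div_self _
  simp only [Finset.sum_sub_distrib]
  rw [e1, e2, sub_self]

section Meas
variable {X : Type*} [MeasurableSpace X] (μ : Measure X) [IsProbabilityMeasure μ]

/-- Index type: measurable sets. -/
@[ext]
structure MS (X : Type*) [MeasurableSpace X] where
  /-- The underlying set. -/
  carrier : Set X
  meas : MeasurableSet carrier

/-- Atom of the finite family `s` containing `x`. -/
def atm (s : Finset (MS X)) (x : X) : Set X := {y | ∀ A ∈ s, (y ∈ A.1 ↔ x ∈ A.1)}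

/-- pattern map -/
def pat (s : Finset (MS X)) (x : X) : s → Prop := fun A => x ∈ A.1.1

theorem measurable_pat (s : Finset (MS X)) : Measurable (pat s) :=
  measurable_pi_iff.2 fun A => measurableSet_setOfPred.1 A.1.2

theorem atm_eq (s : Finset (MS X)) (x : X) : atm s x = pat s ⁻¹' {pat s x} := by
  ext y
  simp only [atm, mem_ofPred_eq, mem_preimage, mem_singleton_iff, funext_iff, pat, eq_iff_iff]
  constructor
  · rintro h ⟨A, hA⟩; exact h A hA
  · intro h A hA; exact h ⟨A, hA⟩

/-- Entropy of a finite family. -/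
noncomputable def ent (s : Finset (MS X)) : ℝ := ∫ x, - Real.log (μ.real (atm s x)) ∂μ

theorem integral_fin {ι : Type*} [Fintype ι] [MeasurableSpace ι] [MeasurableSingletonClass ι]
    (p : X → ι) (hp : Measurable p) (g : ι → ℝ) :
    ∫ x, g (p x) ∂μ = ∑ i, μ.real (p ⁻¹' {i}) * g i := by
  have h := integral_map (μ := μ) (f := g) hp.aemeasurable
    (Measurable.of_discrete (f := g)).aestronglyMeasurable
  rw [← h, integral_fintype (Integrable.of_finite)]
  refine Finset.sum_congr rfl fun i _ => ?_
  rw [smul_eq_mul, map_measureReal_apply hp (measurableSet_singleton i)]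

theorem integrable_fin {ι : Type*} [Fintype ι] [MeasurableSpace ι] [MeasurableSingletonClass ι]
    (p : X → ι) (hp : Measurable p) (g : ι → ℝ) : Integrable (fun x => g (p x)) μ := by
  have := Measure.isProbabilityMeasure_map (μ := μ) hp.aemeasurable
  exact (integrable_map_measure (Measurable.of_discrete (f := g)).aestronglyMeasurable
    hp.aemeasurable).1 (Integrable.of_finite (μ := μ.map p) (f := g))

theorem real_preimage_sum {ι : Type*} [Fintype ι] [MeasurableSpace ι] [MeasurableSingletonClass ι]
    (p : X → ι) (hp : Measurable p) (S : Set X) :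
    ∑ i, μ.real (p ⁻¹' {i} ∩ S) = μ.real S := by
  have := sum_measureReal_preimage_singleton (μ := μ.restrict S) (Finset.univ : Finset ι) (f := p)
    (fun i _ => hp (measurableSet_singleton i))
  simp only [Finset.coe_univ, preimage_univ] at this
  rw [measureReal_restrict_apply MeasurableSet.univ, univ_inter] at this
  rw [← this]
  refine Finset.sum_congr rfl fun i _ => ?_
  rw [measureReal_restrict_apply (hp (measurableSet_singleton i))]


theorem ent_integrable (s : Finset (MS X)) :
    Integrable (fun x => Real.log (μ.real (atm s x))) μ := by
  simp only [atm_eq]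
  exact integrable_fin μ (pat s) (measurable_pat s) (fun i => Real.log (μ.real (pat s ⁻¹' {i})))

theorem atm_union (s t : Finset (MS X)) (x : X) : atm (s ∪ t) x = atm s x ∩ atm t x := by
  ext y
  simp only [atm, Finset.mem_union, mem_ofPred_eq, mem_inter_iff]
  constructor
  · intro h; exact ⟨fun A hA => h A (Or.inl hA), fun A hA => h A (Or.inr hA)⟩
  · rintro ⟨h1, h2⟩ A (hA | hA)
    · exact h1 A hA
    · exact h2 A hA

theorem ent_sub (a b c : Finset (MS X)) :
    ent μ (a ∪ b ∪ c) + ent μ c ≤ ent μ (a ∪ c) + ent μ (b ∪ c) := by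
  set w : (a → Prop) → (b → Prop) → (c → Prop) → ℝ := fun i j k =>
    μ.real (pat a ⁻¹' {i} ∩ (pat b ⁻¹' {j} ∩ pat c ⁻¹' {k})) with hw
  have hsh := shannon_aux w (fun _ _ _ => measureReal_nonneg)
  have hac : ∀ i k, ∑ j, w i j k = μ.real (pat a ⁻¹' {i} ∩ pat c ⁻¹' {k}) := by
    intro i k
    rw [← real_preimage_sum μ (pat b) (measurable_pat b)]
    refine Finset.sum_congr rfl fun j _ => ?_
    rw [hw]; simp only
    rw [inter_left_comm]
  have hbc : ∀ j k, ∑ i, w i j k = μ.real (pat b ⁻¹' {j} ∩ pat c ⁻¹' {k}) := by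
    intro j k
    rw [← real_preimage_sum μ (pat a) (measurable_pat a)]
  have hc : ∀ k, ∑ i, ∑ j, w i j k = μ.real (pat c ⁻¹' {k}) := by
    intro k
    simp only [hac]
    rw [← real_preimage_sum μ (pat a) (measurable_pat a)]
  simp only [hbc, hc] at hsh
  simp only [hac] at hsh
  have hJ : Measurable fun x => (pat a x, pat b x, pat c x) :=
    (measurable_pat a).prodMk ((measurable_pat b).prodMk (measurable_pat c))
  have hintg := integral_fin μ (fun x => (pat a x, pat b x, pat c x)) hJ
    (fun t => Real.log (w t.1 t.2.1 t.2.2) + Real.log (μ.real (pat c ⁻¹' {t.2.2}))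
      - Real.log (μ.real (pat a ⁻¹' {t.1} ∩ pat c ⁻¹' {t.2.2}))
      - Real.log (μ.real (pat b ⁻¹' {t.2.1} ∩ pat c ⁻¹' {t.2.2})))
  simp only [Fintype.sum_prod_type] at hintg
  have hpre : ∀ i j k, (fun x => (pat a x, pat b x, pat c x)) ⁻¹' {(i, j, k)} =
      pat a ⁻¹' {i} ∩ (pat b ⁻¹' {j} ∩ pat c ⁻¹' {k}) := by
    intro i j k; ext x; simp
  simp only [hpre] at hintg
  rw [← hintg] at hsh
  have e : ∀ x, Real.log (w (pat a x) (pat b x) (pat c x)) +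
      Real.log (μ.real (pat c ⁻¹' {pat c x}))
      - Real.log (μ.real (pat a ⁻¹' {pat a x} ∩ pat c ⁻¹' {pat c x}))
      - Real.log (μ.real (pat b ⁻¹' {pat b x} ∩ pat c ⁻¹' {pat c x})) =
      Real.log (μ.real (atm (a ∪ b ∪ c) x)) + Real.log (μ.real (atm c x))
      - Real.log (μ.real (atm (a ∪ c) x)) - Real.log (μ.real (atm (b ∪ c) x)) := by
    intro x
    simp only [hw, atm_union]
    simp only [atm_eq, inter_assoc]
  simp only [e] at hsh
  have i1 : Integrable (fun x => Real.log (μ.real (atm (a ∪ b ∪ c) x)) +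
      Real.log (μ.real (atm c x))) μ := (ent_integrable μ _).add (ent_integrable μ _)
  have i2 : Integrable (fun x => Real.log (μ.real (atm (a ∪ b ∪ c) x)) +
      Real.log (μ.real (atm c x)) - Real.log (μ.real (atm (a ∪ c) x))) μ :=
    i1.sub (ent_integrable μ _)
  rw [integral_sub i2 (ent_integrable μ _), integral_sub i1 (ent_integrable μ _),
    integral_add (ent_integrable μ _) (ent_integrable μ _)] at hsh
  simp only [ent, integral_neg]
  linarith

theorem ae_pos (s : Finset (MS X)) : ∀ᵐ x ∂μ, 0 < μ.real (atm s x) := by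
  have : ∀ i : s → Prop, ∀ᵐ x ∂μ, pat s x = i → 0 < μ.real (pat s ⁻¹' {i}) := by
    intro i
    by_cases h : 0 < μ.real (pat s ⁻¹' {i})
    · exact ae_of_all _ fun _ _ => h
    · have h0 : μ.real (pat s ⁻¹' {i}) = 0 := le_antisymm (not_lt.1 h) measureReal_nonneg
      rw [measureReal_eq_zero_iff] at h0
      have : ∀ᵐ x ∂μ, x ∉ pat s ⁻¹' {i} := measure_eq_zero_iff_ae_notMem.1 h0
      filter_upwards [this] with x hx hxi
      exact absurd hxi hx
  filter_upwards [ae_all_iff.2 this] with x hx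
  rw [atm_eq]
  exact hx _ rfl

theorem ent_mono (s t : Finset (MS X)) (h : s ⊆ t) : ent μ s ≤ ent μ t := by
  refine integral_mono_ae (ent_integrable μ s).neg (ent_integrable μ t).neg ?_
  filter_upwards [ae_pos μ t] with x hx
  refine neg_le_neg (Real.log_le_log hx ?_)
  refine measureReal_mono ?_
  intro y hy A hA
  exact hy A (h hA)

/-- The shift on measurable sets. -/
def shiftMS (T : X ≃ᵐ X) : Equiv.Perm (MS X) where
  toFun A := ⟨T ⁻¹' A.1, T.measurable A.2⟩
  invFun A := ⟨T.symm ⁻¹' A.1, T.symm.measurable A.2⟩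
  left_inv A := by ext x; simp
  right_inv A := by ext x; simp

theorem ent_inv (T : X ≃ᵐ X) (hT : MeasurePreserving T μ μ) (s : Finset (MS X)) :
    ent μ (s.image (shiftMS T)) = ent μ s := by
  have h1 : ∀ x, atm (s.image (shiftMS T)) x = T ⁻¹' atm s (T x) := by
    intro x
    ext y
    simp only [atm, mem_ofPred_eq, mem_preimage, Finset.forall_mem_image]
    rfl
  have h2 := hT.integral_comp T.measurableEmbedding (fun x => - Real.log (μ.real (atm s x)))
  unfold ent
  rw [← h2]
  congr 1
  ext x
  rw [h1, hT.measureReal_preimage]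
  rw [atm_eq]
  exact (measurable_pat s (measurableSet_singleton _)).nullMeasurableSet

theorem ent_poly (T : X ≃ᵐ X) (hT : MeasurePreserving T μ μ) :
    ShiftPoly (shiftMS T) (ent μ) :=
  ⟨ent_mono μ, ent_sub μ, ent_inv μ T hT⟩

theorem ent_congr (s t : Finset (MS X)) (h : ∀ x, atm s x = atm t x) : ent μ s = ent μ t := by
  simp only [ent, h]

theorem measurable_dec (D : Set X) (hD : MeasurableSet D) :
    Measurable fun x => decide (x ∈ D) := by
  refine measurable_to_bool ?_
  convert hD using 1
  ext x; simp

theorem ent_single (D : MS X) :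
    ent μ {D} = Real.negMulLog (μ.real D.1) + Real.negMulLog (1 - μ.real D.1) := by
  have h := integral_fin μ (fun x => decide (x ∈ D.1)) (measurable_dec _ D.2)
    (fun b => - Real.log (if b then μ.real D.1 else μ.real D.1ᶜ))
  have e1 : (fun x => decide (x ∈ D.1)) ⁻¹' {true} = D.1 := by ext; simp
  have e2 : (fun x => decide (x ∈ D.1)) ⁻¹' {false} = D.1ᶜ := by ext; simp
  rw [Fintype.sum_bool, e1, e2] at h
  have hE : ∀ x, μ.real (atm {D} x) = if decide (x ∈ D.1) = true then μ.real D.1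
      else μ.real D.1ᶜ := by
    intro x
    by_cases hx : x ∈ D.1
    · simp only [hx, decide_true, if_true]
      congr 1; ext y; simp [atm, hx]
    · simp only [hx, decide_false]
      simp only [Bool.false_eq_true, if_false]
      congr 1; ext y; simp [atm, hx]
  unfold ent
  simp only [hE]
  rw [h, ← probReal_compl_eq_one_sub D.2]
  simp [Real.negMulLog]

theorem approx_set (B : MS X) (c : Finset (MS X)) :
    ∃ u : Set (c → Prop), μ.real (B.1 ∆ (pat c ⁻¹' u)) ≤ ent μ ({B} ∪ c) - ent μ c := by
  set w1 : (c → Prop) → ℝ := fun i => μ.real (B.1 ∩ pat c ⁻¹' {i}) with hw1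
  set w0 : (c → Prop) → ℝ := fun i => μ.real (B.1ᶜ ∩ pat c ⁻¹' {i}) with hw0
  have hW : ∀ i, μ.real (pat c ⁻¹' {i}) = w1 i + w0 i := by
    intro i
    rw [hw1, hw0]; simp only
    rw [inter_comm B.1, inter_comm B.1ᶜ, ← sdiff_eq, measureReal_inter_add_sdiff B.2]
  refine ⟨{i | w0 i < w1 i}, ?_⟩
  have hJ : Measurable fun x => (pat c x, decide (x ∈ B.1)) :=
    (measurable_pat c).prodMk (measurable_dec _ B.2)
  have hintg := integral_fin μ _ hJ (fun t => Real.log (w1 t.1 + w0 t.1) -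
    Real.log (if t.2 then w1 t.1 else w0 t.1))
  have hpre1 : ∀ i, (fun x => (pat c x, decide (x ∈ B.1))) ⁻¹' {(i, true)} =
      B.1 ∩ pat c ⁻¹' {i} := by
    intro i; ext x; simp [and_comm]
  have hpre0 : ∀ i, (fun x => (pat c x, decide (x ∈ B.1))) ⁻¹' {(i, false)} =
      B.1ᶜ ∩ pat c ⁻¹' {i} := by
    intro i; ext x; simp [and_comm]
  simp only [Fintype.sum_prod_type, Fintype.sum_bool, hpre1, hpre0] at hintg
  have e : ∀ x, Real.log (w1 (pat c x) + w0 (pat c x)) -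
      Real.log (if decide (x ∈ B.1) = true then w1 (pat c x) else w0 (pat c x)) =
      Real.log (μ.real (atm c x)) - Real.log (μ.real (atm ({B} ∪ c) x)) := by
    intro x
    rw [atm_union, ← hW, atm_eq c]
    congr 2
    by_cases hx : x ∈ B.1
    · simp only [hx, decide_true, if_true, hw1]
      congr 2; ext y; simp [atm, hx]
    · simp only [hx, decide_false, Bool.false_eq_true, if_false, hw0]
      congr 2; ext y; simp [atm, hx]
  simp only [e] at hintg
  rw [integral_sub (ent_integrable μ _) (ent_integrable μ _)] at hintg
  have hent : ent μ ({B} ∪ c) - ent μ c = ∫ x, Real.log (μ.real (atm c x)) ∂μ -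
      ∫ x, Real.log (μ.real (atm ({B} ∪ c) x)) ∂μ := by
    simp only [ent, integral_neg]
    ring
  rw [hent, hintg, ← real_preimage_sum μ (pat c) (measurable_pat c)]
  refine Finset.sum_le_sum fun i _ => ?_
  have hlog : ∀ a b : ℝ, 0 ≤ a → 0 ≤ b → a * b / (a + b) ≤
      a * (Real.log (a + b) - Real.log a) := by
    intro a b ha hb
    rcases ha.eq_or_lt with h | h
    · rw [← h]; simp
    · have h4 := Real.one_sub_inv_le_log_of_pos (show 0 < (a + b) / a by positivity)
      rw [Real.log_div (by positivity) (by positivity)] at h4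
      have h5 := mul_le_mul_of_nonneg_left h4 h.le
      have e : a * (1 - ((a + b) / a)⁻¹) = a * b / (a + b) := by field_simp; ring
      linarith
  have n1 : 0 ≤ w1 i := measureReal_nonneg
  have n0 : 0 ≤ w0 i := measureReal_nonneg
  have k1 := hlog _ _ n1 n0
  have k0 := hlog _ _ n0 n1
  rw [add_comm (w0 i), mul_comm (w0 i) (w1 i)] at k0
  have hmin : min (w1 i) (w0 i) ≤ 2 * (w1 i * w0 i / (w1 i + w0 i)) := by
    rcases (add_nonneg n1 n0).eq_or_lt with h | h
    · have z1 : w1 i = 0 := by linarith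
      have z0 : w0 i = 0 := by linarith
      rw [z1, z0]; simp
    · rw [mul_div_assoc', le_div_iff₀ h]
      rcases le_total (w1 i) (w0 i) with h' | h'
      · rw [min_eq_left h']; nlinarith
      · rw [min_eq_right h']; nlinarith
  have hm : μ.real (pat c ⁻¹' {i} ∩ B.1 ∆ (pat c ⁻¹' {i | w0 i < w1 i})) ≤ min (w1 i) (w0 i) := by
    by_cases h : w0 i < w1 i
    · rw [min_eq_right h.le]
      refine measureReal_mono ?_
      rintro x ⟨hx, hx2⟩
      refine ⟨?_, hx⟩
      have hx' : pat c x = i := hx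
      rw [mem_symmDiff] at hx2
      simp only [mem_preimage, mem_ofPred_eq, hx', h, not_true_eq_false, and_false, true_and,
        false_or] at hx2
      exact hx2
    · rw [min_eq_left (not_lt.1 h)]
      refine measureReal_mono ?_
      rintro x ⟨hx, hx2⟩
      refine ⟨?_, hx⟩
      have hx' : pat c x = i := hx
      rw [mem_symmDiff] at hx2
      simp only [mem_preimage, mem_ofPred_eq, hx', h, not_false_eq_true, and_true, false_and,
        or_false] at hx2
      exact hx2
  simp only [Bool.false_eq_true, if_true, if_false]
  change _ ≤ w1 i * (Real.log (w1 i + w0 i) - Real.log (w1 i)) +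
    w0 i * (Real.log (w1 i + w0 i) - Real.log (w0 i))
  linarith

/-- Sets measurable with respect to the generated algebra have zero conditional entropy. -/
theorem cf_zero_of_measurable {σ : Equiv.Perm (MS X)} (hf : ShiftPoly σ (ent μ))
    (C : Set (MS X)) (B : Set X)
    (hB : MeasurableSet[MeasurableSpace.generateFrom (MS.carrier '' C)] B) :
    ∃ hm : MeasurableSet B, cf (ent μ) {⟨B, hm⟩} C = 0 := by
  have mem0 : ∀ A ∈ C, cf (ent μ) {A} C = 0 := by
    intro A hA
    refine le_antisymm ?_ (cf_nonneg hf _ _)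
    refine (cf_le hf {A} {A} (by simpa using hA)).trans ?_
    simp
  induction B, hB using MeasurableSpace.generateFrom_induction with
  | hC t ht =>
    obtain ⟨A, hA, rfl⟩ := ht
    exact ⟨A.2, mem0 A hA⟩
  | empty =>
    refine ⟨MeasurableSet.empty, le_antisymm ?_ (cf_nonneg hf _ _)⟩
    refine (cf_le hf _ ∅ (by simp)).trans (le_of_eq ?_)
    rw [sub_eq_zero]
    refine ent_congr μ _ _ fun x => ?_
    ext y; simp [atm]
  | compl t _ ih =>
    obtain ⟨hm, h⟩ := ih
    refine ⟨hm.compl, ?_⟩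
    rw [← h]
    unfold cf
    refine iInf_congr fun c => ?_
    congr 1
    refine ent_congr μ _ _ fun x => ?_
    rw [atm_union, atm_union]
    ext y
    simp only [mem_inter_iff, atm, Finset.mem_singleton, forall_eq, mem_ofPred_eq,
        mem_compl_iff, not_iff_not]
  | iUnion s _ ih =>
    choose hm h using ih
    refine ⟨MeasurableSet.iUnion hm, le_antisymm ?_ (cf_nonneg hf _ _)⟩
    set U : MS X := ⟨⋃ i, s i, MeasurableSet.iUnion hm⟩ with hU
    set D : ℕ → MS X := fun N => ⟨(⋃ i, s i) \ ⋃ i < N, s i,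
      (MeasurableSet.iUnion hm).diff (MeasurableSet.iUnion fun i => MeasurableSet.iUnion fun _ => hm i)⟩
      with hD
    have habs : cf (ent μ) {U} C ≤ cf (ent μ) {U} (C ∪ range fun i => (⟨s i, hm i⟩ : MS X)) := by
      refine absorb hf _ _ _ ?_
      rintro _ ⟨i, rfl⟩
      exact h i
    have hN : ∀ N, cf (ent μ) {U} (C ∪ range fun i => (⟨s i, hm i⟩ : MS X)) ≤
        ent μ {D N} - ent μ ∅ := by
      intro N
      set c : Finset (MS X) := (Finset.range N).image fun i => (⟨s i, hm i⟩ : MS X) with hc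
      refine (cf_le hf {U} c ?_).trans ?_
      · intro x hx
        simp only [hc, Finset.coe_image, mem_image] at hx
        obtain ⟨i, _, rfl⟩ := hx
        exact Or.inr ⟨i, rfl⟩
      · have h1 := fin_anti hf {D N} ∅ c (Finset.empty_subset _)
        rw [Finset.union_empty] at h1
        refine le_trans (le_of_eq ?_) h1
        congr 1
        refine ent_congr μ _ _ fun x => ?_
        rw [atm_union, atm_union]
        ext y
        simp only [mem_inter_iff, and_congr_left_iff]
        intro hy
        have hy' : ∀ i < N, (y ∈ s i ↔ x ∈ s i) := fun i hi =>
          hy ⟨s i, hm i⟩ (Finset.mem_image.2 ⟨i, Finset.mem_range.2 hi, rfl⟩)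
        simp only [atm, Finset.mem_singleton, forall_eq, mem_ofPred_eq, hU, hD, Set.mem_sdiff,
          mem_iUnion, exists_prop, not_exists, not_and]
        by_cases hx : ∃ i < N, x ∈ s i
        · obtain ⟨i, hi, hxi⟩ := hx
          have hyi := (hy' i hi).2 hxi
          constructor
          · intro _
            exact ⟨fun hh => absurd hyi (hh.2 i hi), fun hh => absurd hxi (hh.2 i hi)⟩
          · intro _
            exact ⟨fun _ => ⟨i, hxi⟩, fun _ => ⟨i, hyi⟩⟩
        · have h1 : ∀ i < N, x ∉ s i := fun i hi hxi => hx ⟨i, hi, hxi⟩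
          have h2 : ∀ i < N, y ∉ s i := fun i hi hyi => h1 i hi ((hy' i hi).1 hyi)
          constructor
          · intro hh
            exact ⟨fun k => ⟨hh.1 k.1, h1⟩, fun k => ⟨hh.2 k.1, h2⟩⟩
          · intro hh
            exact ⟨fun k => (hh.1 ⟨k, h2⟩).1, fun k => (hh.2 ⟨k, h1⟩).1⟩
    have hD0 : Tendsto (fun N => μ.real (D N).1) atTop (𝓝 0) := by
      have hanti : Antitone fun N => (D N).1 := by
        intro m n hmn
        refine sdiff_subset_sdiff_right ?_
        intro x
        simp only [mem_iUnion, exists_prop]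
        rintro ⟨i, hi, hx⟩
        exact ⟨i, by lia, hx⟩
      have := tendsto_measure_iInter_atTop (μ := μ) (s := fun N => (D N).1)
        (fun N => (D N).2.nullMeasurableSet) hanti ⟨0, measure_ne_top _ _⟩
      have he : ⋂ N, (D N).1 = ∅ := by
        ext x
        simp only [mem_iInter, mem_empty_iff_false, iff_false]
        intro hx
        obtain ⟨i, hi⟩ := mem_iUnion.1 (hx 0).1
        refine (hx (i + 1)).2 ?_
        simp only [mem_iUnion, exists_prop]
        exact ⟨i, by lia, hi⟩
      rw [he, measure_empty] at this
      exact (ENNReal.tendsto_toReal ENNReal.zero_ne_top).comp this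
    have hlim : Tendsto (fun N => ent μ {D N} - ent μ ∅) atTop (𝓝 0) := by
      have he : ent μ (∅ : Finset (MS X)) = 0 := by simp [ent, atm]
      simp only [he, sub_zero, ent_single]
      have hc : Continuous fun t : ℝ => Real.negMulLog t + Real.negMulLog (1 - t) := by fun_prop
      have := (hc.tendsto 0).comp hD0
      simp only [Real.negMulLog_zero, sub_zero, Real.negMulLog_one, add_zero] at this
      exact this
    exact habs.trans (ge_of_tendsto' hlim hN)

end Meas


section Fin
variable {X : Type*} [mX : MeasurableSpace X] (μ : Measure X) [IsProbabilityMeasure μ]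

theorem shiftMS_pow (T : X ≃ᵐ X) (A : MS X) (m : ℕ) :
    (((shiftMS T) ^ (m : ℤ)) A).carrier = T^[m] ⁻¹' A.carrier := by
  rw [zpow_natCast]
  induction m with
  | zero => rfl
  | succ m ih =>
    rw [pow_succ', Equiv.Perm.mul_apply]
    change T ⁻¹' (((shiftMS T) ^ m) A).carrier = _
    rw [ih]
    rfl

theorem partPast_le (T : X ≃ᵐ X) {k : ℕ} (p : X → Fin k) (hp : Measurable p) :
    partPast T p ≤ mX := by
  refine iSup_le fun n => ?_
  rw [← measurable_iff_comap_le]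
  exact (measurable_from_top (f := id)).comp (hp.comp (T.measurable.iterate (n+1)))

theorem condExp_zero {G : MeasurableSpace X} (hG : G ≤ mX) (B B' : Set X)
    (hB' : MeasurableSet[G] B') (h : ∀ᵐ x ∂μ, x ∈ B ↔ x ∈ B') :
    ∫ x, Real.negMulLog ((μ[B.indicator (fun _ => (1 : ℝ)) | G]) x) ∂μ = 0 := by
  have h1 : B.indicator (fun _ => (1 : ℝ)) =ᵐ[μ] B'.indicator (fun _ => (1 : ℝ)) := by
    filter_upwards [h] with x hx
    simp only [indicator, hx]
  have h2 := condExp_congr_ae (m := G) h1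
  have h3 : μ[B'.indicator (fun _ => (1 : ℝ)) | G] = B'.indicator (fun _ => (1 : ℝ)) :=
    condExp_of_stronglyMeasurable hG (stronglyMeasurable_const.indicator hB')
      ((integrable_const (1 : ℝ)).indicator (hG _ hB'))
  rw [h3] at h2
  refine integral_eq_zero_of_ae ?_
  filter_upwards [h2] with x hx
  rw [hx]
  by_cases hxB : x ∈ B' <;> simp [hxB]

theorem ks_zero (T : X ≃ᵐ X) (B : MS X)
    (h : rate (shiftMS T) (ent μ) {B} = 0) :
    partKS μ T (fun z => if z ∈ B.1 then (0 : Fin 2) else 1) = 0 := by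
  set p : X → Fin 2 := fun z => if z ∈ B.1 then (0 : Fin 2) else 1 with hpdef
  have hp : Measurable p := Measurable.ite B.2 measurable_const measurable_const
  have hG := partPast_le T p hp
  have e0 : p ⁻¹' {0} = B.1 := by
    ext x; by_cases hx : x ∈ B.1 <;> simp [hpdef, hx]
  have e1 : p ⁻¹' {1} = B.1ᶜ := by
    ext x; by_cases hx : x ∈ B.1 <;> simp [hpdef, hx]
  have key : ∀ j : ℕ, ∃ E : Set X, MeasurableSet[partPast T p] E ∧
      μ.real (B.1 ∆ E) ≤ (1 / 2) ^ j := by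
    intro j
    have hδ : (0 : ℝ) < (1 / 2) ^ j := by positivity
    obtain ⟨c, hc, hlt⟩ := cf_approx (f := ent μ) {B} (fut (shiftMS T) {B} 1) hδ
    obtain ⟨u, hu⟩ := approx_set μ B c
    refine ⟨pat c ⁻¹' u, ?_, ?_⟩
    · have hm : Measurable[partPast T p] (pat c) := by
        refine @measurable_pi_iff _ _ _ (partPast T p) _ _ |>.2 fun A => ?_
        refine @measurableSet_setOfPred _ (partPast T p) _ |>.1 ?_
        obtain ⟨m, hm, B', hB', hA⟩ := hc A.2
        rw [Finset.mem_singleton] at hB'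
        subst hB'
        have : MeasurableSet[partPast T p] A.1.carrier := by
          obtain ⟨k, rfl⟩ : ∃ k : ℕ, m = ((k + 1 : ℕ) : ℤ) := ⟨(m - 1).toNat, by lia⟩
          rw [← hA, shiftMS_pow]
          refine (le_iSup (fun n : ℕ => MeasurableSpace.comap (fun x => p (T^[n + 1] x)) ⊤) k) _ ?_
          refine ⟨{0}, trivial, ?_⟩
          rw [← e0]; rfl
        exact this
      exact hm (Set.toFinite u).measurableSet
    · unfold rate at h
      linarith
  choose E hE hEμ using key
  have hsum : ∑' j, μ (B.1 ∆ E j) ≠ ∞ := by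
    have hs : Summable fun j : ℕ => ((1 : ℝ) / 2) ^ j := summable_geometric_two
    have : ∀ j, μ (B.1 ∆ E j) ≤ ENNReal.ofReal ((1 / 2) ^ j) := by
      intro j
      rw [← ofReal_measureReal]
      exact ENNReal.ofReal_le_ofReal (hEμ j)
    exact ne_top_of_le_ne_top hs.tsum_ofReal_ne_top (ENNReal.tsum_le_tsum this)
  have hbc := ae_eventually_notMem hsum
  set B' : Set X := ⋂ M : ℕ, ⋃ j : ℕ, E (j + M) with hB'
  have hB'm : MeasurableSet[partPast T p] B' :=
    MeasurableSet.iInter fun M => MeasurableSet.iUnion fun j => hE _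
  have hae : ∀ᵐ x ∂μ, x ∈ B.1 ↔ x ∈ B' := by
    filter_upwards [hbc] with x hx
    obtain ⟨M, hM⟩ := eventually_atTop.1 hx
    have hM' : ∀ j ≥ M, (x ∈ B.1 ↔ x ∈ E j) := by
      intro j hj
      have := hM j hj
      rw [mem_symmDiff] at this
      tauto
    simp only [hB', mem_iInter, mem_iUnion]
    constructor
    · intro hx K
      exact ⟨M, (hM' _ (by lia)).1 hx⟩
    · intro hx
      obtain ⟨j, hj⟩ := hx M
      exact (hM' _ (by lia)).2 hj
  unfold partKS condPartEntropy
  rw [Fin.sum_univ_two, e0, e1, condExp_zero μ hG B.1 B' hB'm hae,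
    condExp_zero μ hG B.1ᶜ B'ᶜ hB'm.compl (hae.mono fun x hx => not_congr hx), add_zero]

theorem trivial_of_rate (T : X ≃ᵐ X) (B : MS X)
    (hK : ∀ A : Set X, MeasurableSet[pinskerAlg μ T] A → μ A = 0 ∨ μ A = 1)
    (h : rate (shiftMS T) (ent μ) {B} = 0) : μ B.1 = 0 ∨ μ B.1 = 1 := by
  refine hK _ ?_
  set p : X → Fin 2 := fun z => if z ∈ B.1 then (0 : Fin 2) else 1 with hpdef
  have hp : Measurable p := Measurable.ite B.2 measurable_const measurable_const
  have hle : MeasurableSpace.comap p ⊤ ≤ pinskerAlg μ T :=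
    le_iSup_of_le 2 (le_iSup_of_le p (le_iSup_of_le hp (le_iSup_of_le (ks_zero μ T B h) le_rfl)))
  refine hle _ ⟨{0}, trivial, ?_⟩
  ext x; by_cases hx : x ∈ B.1 <;> simp [hpdef, hx]

end Fin

section Top
variable {X : Type*} [MetricSpace X] [CompactSpace X]

theorem asymp_of_same (T : X → X) (q : ℕ → X) (hq : DenseRange q) (n : ℕ → ℕ) (N : ℕ) (x y : X)
    (h : ∀ m k : ℕ, T^[m + n k + 1 + N] x ∈ Metric.ball (q k.unpair.1) (1 / (k.unpair.2 + 1)) ↔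
      T^[m + n k + 1 + N] y ∈ Metric.ball (q k.unpair.1) (1 / (k.unpair.2 + 1))) :
    IsAsymptoticPair T x y := by
  refine Metric.tendsto_atTop.2 fun ε hε => ?_
  obtain ⟨j, hj⟩ := exists_nat_one_div_lt (show (0 : ℝ) < ε / 2 by linarith)
  have hr : (0 : ℝ) < 1 / ((j : ℝ) + 1) := by positivity
  obtain ⟨F, hF⟩ := isCompact_univ.elim_finite_subcover
    (fun i : ℕ => Metric.ball (q i) (1 / ((j : ℝ) + 1))) (fun i => Metric.isOpen_ball) (by
      intro z _
      obtain ⟨i, hi⟩ := hq.exists_dist_lt z hr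
      exact mem_iUnion.2 ⟨i, hi⟩)
  refine ⟨(∑ i ∈ F, n (Nat.pair i j)) + 1 + N, fun l hl => ?_⟩
  obtain ⟨i, hiF, hi⟩ := mem_iUnion₂.1 (hF (mem_univ (T^[l] x)))
  have hle : n (Nat.pair i j) ≤ ∑ i ∈ F, n (Nat.pair i j) :=
    Finset.single_le_sum (f := fun i => n (Nat.pair i j)) (fun _ _ => Nat.zero_le _) hiF
  have h' := h (l - (n (Nat.pair i j) + 1 + N)) (Nat.pair i j)
  rw [show l - (n (Nat.pair i j) + 1 + N) + n (Nat.pair i j) + 1 + N = l by lia] at h'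
  simp only [Nat.unpair_pair] at h'
  have hy := h'.1 hi
  rw [Metric.mem_ball] at hi hy
  rw [Real.dist_0_eq_abs, abs_of_nonneg dist_nonneg]
  have := dist_triangle_right (T^[l] x) (T^[l] y) (q i)
  linarith

theorem exists_asymp [mX : MeasurableSpace X] [BorelSpace X]
    (T : X ≃ₜ X) (μ : Measure X) [IsProbabilityMeasure μ]
    (hinv : MeasurePreserving (⇑T) μ μ)
    (hK : ∀ A : Set X, MeasurableSet[pinskerAlg μ (⇑T)] A → μ A = 0 ∨ μ A = 1)
    (U V : Set X) (hUo : IsOpen U) (hVo : IsOpen V) (hU : 0 < μ U) (hV : 0 < μ V) :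
    ∃ x ∈ U, ∃ y ∈ V, IsAsymptoticPair T x y := by
  by_contra hcon
  push Not at hcon
  obtain ⟨x0, -⟩ := nonempty_of_measure_ne_zero hU.ne'
  have : Nonempty X := ⟨x0⟩
  set q : ℕ → X := TopologicalSpace.denseSeq X
  set S : X ≃ᵐ X := T.toMeasurableEquiv with hS
  set A : ℕ → MS X := fun k =>
    ⟨Metric.ball (q k.unpair.1) (1 / (k.unpair.2 + 1)), measurableSet_ball⟩ with hA
  have hpoly := ent_poly μ S hinv
  obtain ⟨n, hn⟩ := tail_rate_zero hpoly A
  set G : ℕ → MeasurableSpace X := fun N =>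
    MeasurableSpace.generateFrom (MS.carrier '' tl (shiftMS S) A n N) with hGdef
  have hGanti : ∀ M N, M ≤ N → G N ≤ G M := fun M N h =>
    MeasurableSpace.generateFrom_mono (image_mono (tl_anti A n (by exact_mod_cast h)))
  have hGle : ∀ N, G N ≤ mX := by
    intro N
    refine MeasurableSpace.generateFrom_le ?_
    rintro _ ⟨D, _, rfl⟩
    exact D.2
  have hsep : ∀ N : ℕ, ∃ B : Set X, MeasurableSet[G N] B ∧ U ⊆ B ∧ Disjoint V B := by
    intro N
    set φ : X → (ℕ × ℕ → Bool) := fun x t =>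
      decide (T^[t.1 + n t.2 + 1 + N] x ∈ (A t.2).1) with hφ
    have hφG : Measurable[G N] φ := by
      refine @measurable_pi_iff _ _ _ (G N) _ _ |>.2 fun t => ?_
      refine @measurable_dec X (G N) (T^[t.1 + n t.2 + 1 + N] ⁻¹' (A t.2).1) ?_
      refine MeasurableSpace.measurableSet_generateFrom ?_
      refine ⟨_, ⟨t.2, ((t.1 + n t.2 + 1 + N : ℕ) : ℤ), by push_cast; lia, rfl⟩, ?_⟩
      rw [shiftMS_pow]
      rfl
    have hφm : Measurable φ := hφG.mono (hGle N) le_rfl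
    have hd : Disjoint (φ '' U) (φ '' V) := by
      rw [disjoint_left]
      rintro _ ⟨x, hx, rfl⟩ ⟨y, hy, hxy⟩
      refine hcon x hx y hy ?_
      refine asymp_of_same T q (TopologicalSpace.denseRange_denseSeq X) n N x y fun m k => ?_
      have := congrFun hxy (m, k)
      exact (decide_eq_decide.1 this).symm
    obtain ⟨D, hUD, hVD, hD⟩ := (hUo.measurableSet.analyticSet_image hφm).measurablySeparable
      (hVo.measurableSet.analyticSet_image hφm) hd
    refine ⟨φ ⁻¹' D, hφG hD, image_subset_iff.1 hUD, ?_⟩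
    rw [disjoint_left]
    intro y hy hyD
    exact disjoint_left.1 hVD (mem_image_of_mem φ hy) hyD
  choose B hBm hUB hVB using hsep
  set L : Set X := ⋂ M : ℕ, ⋃ j : ℕ, B (j + M) with hL
  have hLe : ∀ N, L = ⋂ M : ℕ, ⋃ j : ℕ, B (j + (M + N)) := by
    intro N
    refine Subset.antisymm (fun x hx => mem_iInter.2 fun M => mem_iInter.1 hx (M + N)) ?_
    intro x hx
    refine mem_iInter.2 fun M => ?_
    obtain ⟨j, hj⟩ := mem_iUnion.1 (mem_iInter.1 hx M)
    refine mem_iUnion.2 ⟨j + N, ?_⟩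
    rwa [show j + N + M = j + (M + N) by lia]
  have hLm : ∀ N, MeasurableSet[G N] L := by
    intro N
    rw [hLe N]
    exact MeasurableSet.iInter fun M => MeasurableSet.iUnion fun j =>
      hGanti _ _ (by lia) _ (hBm _)
  have hLmeas : MeasurableSet L := hGle 0 _ (hLm 0)
  have hrate : rate (shiftMS S) (ent μ) {⟨L, hLmeas⟩} = 0 := by
    refine hn _ fun N => ?_
    obtain ⟨_, h⟩ := cf_zero_of_measurable μ hpoly _ L (hLm N)
    exact h
  have hUL : U ⊆ L := fun x hx => mem_iInter.2 fun M => mem_iUnion.2 ⟨0, hUB _ hx⟩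
  have hVL : V ⊆ Lᶜ := by
    intro y hy hyL
    obtain ⟨j, hj⟩ := mem_iUnion.1 (mem_iInter.1 hyL 0)
    exact disjoint_left.1 (hVB _) hy hj
  rcases trivial_of_rate μ S ⟨L, hLmeas⟩ hK hrate with h | h
  · exact (hU.trans_le (measure_mono hUL)).ne' h
  · have := (prob_compl_eq_zero_iff hLmeas).2 h
    exact (hV.trans_le (measure_mono hVL)).ne' this

end Top

/-- If `(X,T)` admits an invariant Borel probability measure `μ` of full
topological support which is a K-system (its Pinsker σ-algebra is trivial mod `μ`), then
the set of asymptotic pairs is dense in `X × X`. -/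
theorem ksystem_full_support_asymptotic_dense
    {X : Type*} [MetricSpace X] [CompactSpace X] [MeasurableSpace X] [BorelSpace X]
    (T : X ≃ₜ X) (μ : Measure X) [IsProbabilityMeasure μ]
    (hinv : MeasurePreserving (⇑T) μ μ)
    (hsupp : ∀ U : Set X, IsOpen U → U.Nonempty → 0 < μ U)
    (hK : ∀ A : Set X, MeasurableSet[pinskerAlg μ (⇑T)] A → μ A = 0 ∨ μ A = 1) :
    Dense {p : X × X | IsAsymptoticPair (⇑T) p.1 p.2} := by
  rw [dense_iff_inter_open]
  rintro W hW ⟨⟨a, b⟩, hab⟩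
  obtain ⟨U, V, hU, hV, haU, hbV, hUV⟩ := isOpen_prod_iff.1 hW a b hab
  obtain ⟨x, hx, y, hy, h⟩ := exists_asymp T μ hinv hK U V hU hV
    (hsupp U hU ⟨a, haU⟩) (hsupp V hV ⟨b, hbV⟩)
  exact ⟨(x, y), hUV ⟨hx, hy⟩, h⟩
end
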